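/- arXiv:2305.17014 — 6 statements merged into one kernel-verified Lean document; each statement's English description precedes it below -/
import Mathlib

section
/- Let s ≥ 1, k ≥ 2, and let G be a k-regular simple graph whose girth is at least 2s−1. Then for every vertex v of G, the number N of cycle-free closed walks of length 2s based at v satisfies C_s·k·(k−1)^{s−1} ≤ N ≤ C_s·k^s, where C_s is the s-th Catalan number. -/
/-!
A cycle-free closed walk runs around a plane tree. Its first step `v → u` is a bridge of the forest
it traverses, so the first return to `v` must be the step `u → v`. Cutting there writes the walk
uniquely as `v → u`, a closed walk at `u` avoiding `v`, `u → v`, and another closed walk at `v`;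
iterating turns a walk of length `2s` into a plane tree with `s` edges, each labelled by its end
vertex away from the root. Conversely the walk of such a labelled tree traverses at most `s` edges,
which contain no cycle as soon as the girth exceeds `s`. The labelled trees obey the Catalan
recursion, weighted by the number of choices for `u`: all neighbours of `v` at the base point, all
neighbours but the parent inside an excursion.
-/

open SimpleGraph

/-- `G` is an edge-girth-regular graph with parameters `(n, k, g, lam)`:
a finite simple graph on `n` vertices, `k`-regular, of girth `g`, in which every
edge lies on exactly `lam` cycles of length `g` (each such cycle corresponds to
exactly two closed walks based at an endpoint of the edge and traversing it). -/
def SimpleGraph.IsEGR {V : Type*} (G : SimpleGraph V) (n k g lam : ℕ) : Prop :=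
  Finite V ∧ Nat.card V = n ∧
    (∀ v : V, (G.neighborSet v).ncard = k) ∧
    G.egirth = (g : ℕ∞) ∧
    ∀ u v : V, G.Adj u v →
      Nat.card {p : G.Walk u u // p.IsCycle ∧ p.length = g ∧ s(u, v) ∈ p.edges} = 2 * lam

/-- The number of closed walks of length `l` based at `v`. -/
noncomputable def SimpleGraph.closedWalkCount {V : Type*} (G : SimpleGraph V) (v : V) (l : ℕ) : ℕ :=
  Nat.card {p : G.Walk v v // p.length = l}

/-- The number of cycle-free closed walks of length `l` based at `v`,
i.e. closed walks whose traversed edges form an acyclic subgraph. -/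
noncomputable def SimpleGraph.cycleFreeClosedWalkCount {V : Type*} (G : SimpleGraph V) (v : V)
    (l : ℕ) : ℕ :=
  Nat.card {p : G.Walk v v // p.length = l ∧ p.toSubgraph.coe.IsAcyclic}

section Graph

variable {V : Type*} {G F : SimpleGraph V}

lemma ncard_neighborSet_eq_degree (v : V) [Fintype (G.neighborSet v)] :
    (G.neighborSet v).ncard = G.degree v := by
  rw [Set.ncard_eq_toFinset_card', ← neighborFinset_def, card_neighborFinset_eq_degree]

lemma degree_sub_one_le_ncard_neighborSet_sdiff (v : V) [Fintype (G.neighborSet v)] {X : Set V}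
    (hX : X.Subsingleton) : G.degree v - 1 ≤ (G.neighborSet v \ X).ncard := by
  have hX_card : X.ncard ≤ 1 := (Set.ncard_le_one hX.finite).2 fun _ ha _ hb ↦ hX ha hb
  have hsdiff := Set.ncard_le_ncard_sdiff_add_ncard (G.neighborSet v) X hX.finite
  rw [ncard_neighborSet_eq_degree] at hsdiff
  omega

lemma isAcyclic_coe_iff_isAcyclic_spanningCoe (H : G.Subgraph) :
    H.coe.IsAcyclic ↔ H.spanningCoe.IsAcyclic := by
  refine ⟨fun h x c hc ↦ ?_, fun h ↦ h.embedding H.coeEmbeddingSpanningCoe⟩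
  have hsupp : ∀ y ∈ c.support, y ∈ H.verts := fun y hy ↦ by
    obtain ⟨e, he, hye⟩ := (Walk.mem_support_iff_exists_mem_edges_of_not_nil hc.not_nil).1 hy
    have heH : e ∈ H.edgeSet := H.edgeSet_spanningCoe ▸ c.edges_subset_edgeSet he
    exact H.mem_verts_of_mem_edge heH hye
  have hind : (H.spanningCoe.induce H.verts).IsAcyclic := h.anti fun _ _ hadj ↦ hadj
  refine hind (c.induce H.verts hsupp) (Walk.IsCycle.of_map (f := (Embedding.induce _).toHom) ?_)
  rwa [Walk.map_induce]

lemma isAcyclic_of_encard_edgeSet_lt_egirth (h : G.edgeSet.encard < G.egirth) : G.IsAcyclic := by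
  classical
  intro x c hc
  refine h.not_ge ((egirth_le_length hc).trans ?_)
  rw [← c.length_edges, ← List.toFinset_card_of_nodup hc.edges_nodup,
    ← Set.encard_coe_eq_coe_finsetCard]
  exact Set.encard_le_encard fun e he ↦ c.edges_subset_edgeSet (List.mem_toFinset.1 he)

lemma lt_egirth_of_two_mul_sub_one_le_egirth {s : ℕ}
    (h : ((2 * s - 1 : ℕ) : ℕ∞) ≤ G.egirth) : (s : ℕ∞) < G.egirth := by
  obtain hs | hs := lt_or_ge s 2
  · exact lt_of_lt_of_le (by exact_mod_cast hs.trans (by norm_num)) three_le_egirth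
  · exact lt_of_lt_of_le (by exact_mod_cast (by omega : s < 2 * s - 1)) h

/-- In a forest the edge `s(u, v)` is a bridge, so no walk from `u` to `v` can miss it. -/
lemma mem_edges_of_isAcyclic (hF : F.IsAcyclic) {u v : V} (huv : F.Adj u v) (p : G.Walk u v)
    (hp : ∀ e ∈ p.edges, e ∈ F.edgeSet) : s(u, v) ∈ p.edges := by
  have hbridge := isAcyclic_iff_forall_adj_isBridge.1 hF huv
  simpa using isBridge_iff_forall_walk_mem_edges.1 hbridge (p.transfer F hp)

lemma exists_eq_append_cons_of_mem_support {u v x : V} (p : G.Walk u x) (hv : v ∈ p.support)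
    (huv : u ≠ v) :
    ∃ (w : V) (A : G.Walk u w) (h : G.Adj w v) (B : G.Walk v x),
      v ∉ A.support ∧ p = A.append (.cons h B) := by
  induction p with
  | nil => exact absurd (by simpa using hv) huv.symm
  | @cons u y x h q ih =>
    by_cases hyv : y = v
    · subst hyv
      exact ⟨u, .nil, h, q, by simpa using huv.symm, rfl⟩
    · have hvq : v ∈ q.support := by simpa [huv.symm] using hv
      obtain ⟨w, A, hw, B, hvA, rfl⟩ := ih hvq hyv
      exact ⟨w, .cons h A, hw, B, by simp [huv.symm, hvA], rfl⟩

lemma exists_first_return_of_isAcyclic (hF : F.IsAcyclic) {u v : V} (huv : F.Adj u v)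
    (q : G.Walk u v) (hq : ∀ e ∈ q.edges, e ∈ F.edgeSet) :
    ∃ (A : G.Walk u u) (h : G.Adj u v) (B : G.Walk v v),
      v ∉ A.support ∧ q = A.append (.cons h B) := by
  obtain ⟨w, A, hwv, B, hvA, rfl⟩ :=
    exists_eq_append_cons_of_mem_support q q.end_mem_support huv.ne
  have hmem : s(u, v) ∈ (A.concat hwv).edges :=
    mem_edges_of_isAcyclic hF huv _ fun e he ↦ hq e <| by
      simp only [Walk.edges_concat, List.concat_eq_append, List.mem_append,
        List.mem_singleton] at he
      simp only [Walk.edges_append, Walk.edges_cons, List.mem_append, List.mem_cons]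
      tauto
  rw [Walk.edges_concat, List.concat_eq_append, List.mem_append, List.mem_singleton] at hmem
  obtain hA | hlast := hmem
  · exact absurd (A.snd_mem_support_of_mem_edges hA) hvA
  · obtain rfl : u = w := Sym2.congr_left.1 hlast
    exact ⟨A, hwv, B, hvA, rfl⟩

end Graph

/-- The plane tree of an excursion decomposition of a closed walk at `v` in `G`, none of whose
steps away from `v` ends in `X`. The tree `node h hu A B` stands for the step `v → u`, the walk of
`A` at `u`, the step back to `v`, and the walk of `B` at `v`. The walk of `A` is not to return to
`v`, which makes the decomposition unique. -/
inductive ExcursionTree {V : Type*} (G : SimpleGraph V) : Set V → V → Type _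
  | nil {X : Set V} {v : V} : ExcursionTree G X v
  | node {X : Set V} {v u : V} (h : G.Adj v u) (hu : u ∉ X) (A : ExcursionTree G {v} u)
      (B : ExcursionTree G X v) : ExcursionTree G X v

namespace ExcursionTree

open Finset.HasAntidiagonal (antidiagonal mem_antidiagonal)

variable {V : Type*} {G : SimpleGraph V} {X : Set V} {v x y : V}

/-- The number of excursions, that is, half the length of the encoded walk. -/
def size {X : Set V} {v : V} : ExcursionTree G X v → ℕ
  | nil => 0
  | node _ _ A B => A.size + B.size + 1

/-- The closed walk encoded by a tree. -/
def toWalk {X : Set V} {v : V} : ExcursionTree G X v → G.Walk v v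
  | nil => .nil
  | node h _ A B => .cons h (A.toWalk.append (.cons h.symm B.toWalk))

lemma length_toWalk (t : ExcursionTree G X v) : t.toWalk.length = 2 * t.size := by
  induction t with
  | nil => rfl
  | node h hu A B ihA ihB =>
    simp only [toWalk, size, Walk.length_cons, Walk.length_append, ihA, ihB]
    ring

lemma encard_edgeSet_toWalk_le (t : ExcursionTree G X v) : t.toWalk.edgeSet.encard ≤ t.size := by
  induction t with
  | nil => simp [toWalk]
  | @node X v u h hu A B ihA ihB =>
    have hsub : (node h hu A B).toWalk.edgeSet ⊆
        insert s(v, u) (A.toWalk.edgeSet ∪ B.toWalk.edgeSet) := by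
      simp only [toWalk, Walk.edgeSet_cons, Walk.edgeSet_append, Sym2.eq_swap (a := u)]
      grind
    calc (node h hu A B).toWalk.edgeSet.encard
        ≤ (A.toWalk.edgeSet ∪ B.toWalk.edgeSet).encard + 1 :=
          (Set.encard_le_encard hsub).trans (Set.encard_insert_le _ _)
      _ ≤ A.toWalk.edgeSet.encard + B.toWalk.edgeSet.encard + 1 := by
          gcongr; exact Set.encard_union_le _ _
      _ ≤ A.size + B.size + 1 := by gcongr
      _ = (node h hu A B).size := by simp [size]

lemma isAcyclic_toSubgraph_toWalk (t : ExcursionTree G X v) (ht : t.size < G.egirth) :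
    t.toWalk.toSubgraph.coe.IsAcyclic := by
  rw [isAcyclic_coe_iff_isAcyclic_spanningCoe]
  apply isAcyclic_of_encard_edgeSet_lt_egirth
  calc t.toWalk.toSubgraph.spanningCoe.edgeSet.encard
      = t.toWalk.edgeSet.encard := by rw [Subgraph.edgeSet_spanningCoe, Walk.edgeSet_toSubgraph]
    _ ≤ t.size := t.encard_edgeSet_toWalk_le
    _ < G.egirth := ht
    _ ≤ t.toWalk.toSubgraph.spanningCoe.egirth := egirth_anti (Subgraph.spanningCoe_le _)

/-- The walk of `t` never steps from `v` to `x ∈ X`, so the first step `v → x` marks its end. -/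
lemma toWalk_append_cons_inj (hx : x ∈ X) {t t' : ExcursionTree G X v} {h : G.Adj v x}
    {p p' : G.Walk x y} (e : t.toWalk.append (.cons h p) = t'.toWalk.append (.cons h p')) :
    t = t' ∧ p = p' := by
  induction t generalizing x y with
  | nil =>
    cases t' with
    | nil => simpa [toWalk] using e
    | node _ hu' _ _ =>
      simp only [toWalk, Walk.nil_append, Walk.cons_append, Walk.cons.injEq] at e
      exact absurd (e.1 ▸ hx) hu'
  | node h₁ hu A B ihA ihB =>
    cases t' with
    | nil =>
      simp only [toWalk, Walk.nil_append, Walk.cons_append, Walk.cons.injEq] at e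
      exact absurd (e.1 ▸ hx) hu
    | node _ _ A' B' =>
      simp only [toWalk, Walk.cons_append, Walk.cons.injEq] at e
      obtain ⟨rfl, e⟩ := e
      simp only [heq_eq_eq, ← Walk.append_assoc, Walk.cons_append] at e
      obtain ⟨rfl, eB⟩ := ihA (Set.mem_singleton _) e
      obtain ⟨rfl, rfl⟩ := ihB hx eB
      exact ⟨rfl, rfl⟩

lemma toWalk_injective : Function.Injective (toWalk : ExcursionTree G X v → G.Walk v v) := by
  intro t t' e
  induction t with
  | nil => cases t' <;> simp_all [toWalk]
  | node h hu A B _ ihB =>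
    cases t' with
    | nil => simp [toWalk] at e
    | node _ _ A' B' =>
      simp only [toWalk, Walk.cons.injEq] at e
      obtain ⟨rfl, e⟩ := e
      obtain ⟨rfl, eB⟩ := toWalk_append_cons_inj (Set.mem_singleton _) (eq_of_heq e)
      rw [ihB eB]

lemma exists_toWalk_eq {F : SimpleGraph V} (hF : F.IsAcyclic) (p : G.Walk v v)
    (hp : ∀ e ∈ p.edges, e ∈ F.edgeSet) (hX : ∀ x ∈ X, x ∉ p.support) :
    ∃ t : ExcursionTree G X v, t.toWalk = p := by
  induction hn : p.length using Nat.strong_induction_on generalizing X v with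
  | _ n ih =>
    cases p with
    | nil => exact ⟨nil, rfl⟩
    | @cons _ u _ h q =>
      simp only [Walk.edges_cons, List.mem_cons, forall_eq_or_imp] at hp
      obtain ⟨A, h', B, hvA, rfl⟩ := exists_first_return_of_isAcyclic hF (F.adj_symm hp.1) q hp.2
      simp only [Walk.length_cons, Walk.length_append] at hn
      simp only [Walk.edges_append, Walk.edges_cons, List.mem_append, List.mem_cons] at hp
      simp only [Walk.support_cons, Walk.mem_support_append_iff, List.mem_cons] at hX
      obtain ⟨s, rfl⟩ := ih A.length (by omega) (X := {v}) A (fun e he ↦ hp.2 e (.inl he))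
        (by simpa using hvA) rfl
      obtain ⟨t, rfl⟩ := ih B.length (by omega) (X := X) B (fun e he ↦ hp.2 e (.inr (.inr he)))
        (fun x hx hxB ↦ hX x hx (.inr (.inr (.inr hxB)))) rfl
      have hu : u ∉ X := fun hu ↦ hX u hu (.inr (.inl (Walk.start_mem_support _)))
      exact ⟨node h hu s t, rfl⟩

/-- The trees with exactly `n` excursions. -/
abbrev OfSize (G : SimpleGraph V) (X : Set V) (v : V) (n : ℕ) : Type _ :=
  {t : ExcursionTree G X v // t.size = n}

instance [G.LocallyFinite] (n : ℕ) : Finite (OfSize G X v n) := by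
  classical
  let f (t : OfSize G X v n) : {p : G.Walk v v // p.length = 2 * n} :=
    ⟨t.1.toWalk, by rw [length_toWalk, t.2]⟩
  exact .of_injective f fun t t' e ↦ Subtype.ext (toWalk_injective (congrArg Subtype.val e))

instance : Unique (OfSize G X v 0) where
  default := ⟨nil, rfl⟩
  uniq
    | ⟨nil, _⟩ => rfl

/-- The Catalan decomposition: cut a tree into the first excursion and the remaining ones. -/
def ofSizeSuccEquiv (G : SimpleGraph V) (X : Set V) (v : V) (n : ℕ) :
    OfSize G X v (n + 1) ≃ Σ ij : antidiagonal n,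
      (Σ u : ↥(G.neighborSet v \ X), OfSize G {v} u ij.1.1) × OfSize G X v ij.1.2 where
  toFun
    | ⟨node (u := u) h hu A B, ht⟩ =>
      ⟨⟨(A.size, B.size), mem_antidiagonal.2 (Nat.succ.inj ht)⟩,
        ⟨⟨u, h, hu⟩, A, rfl⟩, B, rfl⟩
  invFun
    | ⟨⟨_, hij⟩, ⟨⟨_, h, hu⟩, A, hA⟩, B, hB⟩ =>
      ⟨node h hu A B, by simp only [size, hA, hB, mem_antidiagonal.1 hij]⟩
  left_inv
    | ⟨node _ _ _ _, _⟩ => rfl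
  right_inv
    | ⟨⟨(_, _), _⟩, ⟨⟨_, _, _⟩, _, rfl⟩, _, rfl⟩ => rfl

variable [G.LocallyFinite]

lemma card_ofSize_succ (X : Set V) (v : V) (n : ℕ) [Fintype ↥(G.neighborSet v \ X)] :
    Nat.card (OfSize G X v (n + 1)) = ∑ ij ∈ antidiagonal n,
      (∑ u : ↥(G.neighborSet v \ X), Nat.card (OfSize G {v} u ij.1)) *
        Nat.card (OfSize G X v ij.2) := by
  rw [Nat.card_congr (ofSizeSuccEquiv G X v n), Nat.card_sigma]
  simp only [Nat.card_prod, Nat.card_sigma]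
  exact Finset.sum_coe_sort (antidiagonal n) fun ij ↦
    (∑ u : ↥(G.neighborSet v \ X), Nat.card (OfSize G {v} u ij.1)) * Nat.card (OfSize G X v ij.2)

lemma card_ofSize_succ_le {c d n : ℕ} (hc : (G.neighborSet v \ X).ncard ≤ c)
    (hfirst : ∀ u, ∀ i ≤ n, Nat.card (OfSize G {v} u i) ≤ catalan i * d ^ i)
    (hrest : ∀ j ≤ n, Nat.card (OfSize G X v j) ≤ catalan j * d ^ j) :
    Nat.card (OfSize G X v (n + 1)) ≤ catalan (n + 1) * c * d ^ n := by
  have : Fintype ↥(G.neighborSet v \ X) := Fintype.ofFinite _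
  rw [← Nat.card_coe_set_eq, Nat.card_eq_fintype_card] at hc
  rw [card_ofSize_succ, catalan_succ', Finset.sum_mul, Finset.sum_mul]
  refine Finset.sum_le_sum fun ⟨i, j⟩ hij ↦ ?_
  obtain rfl : i + j = n := mem_antidiagonal.1 hij
  calc (∑ u : ↥(G.neighborSet v \ X), Nat.card (OfSize G {v} u i)) * Nat.card (OfSize G X v j)
      ≤ (∑ _u : ↥(G.neighborSet v \ X), catalan i * d ^ i) * (catalan j * d ^ j) := by
        gcongr with u
        · exact hfirst u i (by omega)
        · exact hrest j (by omega)
    _ ≤ c * (catalan i * d ^ i) * (catalan j * d ^ j) := by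
        rw [Finset.sum_const, Finset.card_univ, smul_eq_mul]; gcongr
    _ = catalan i * catalan j * c * d ^ (i + j) := by ring

lemma le_card_ofSize_succ {c d n : ℕ} (hc : c ≤ (G.neighborSet v \ X).ncard)
    (hfirst : ∀ u, ∀ i ≤ n, catalan i * d ^ i ≤ Nat.card (OfSize G {v} u i))
    (hrest : ∀ j ≤ n, catalan j * d ^ j ≤ Nat.card (OfSize G X v j)) :
    catalan (n + 1) * c * d ^ n ≤ Nat.card (OfSize G X v (n + 1)) := by
  have : Fintype ↥(G.neighborSet v \ X) := Fintype.ofFinite _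
  rw [← Nat.card_coe_set_eq, Nat.card_eq_fintype_card] at hc
  rw [card_ofSize_succ, catalan_succ', Finset.sum_mul, Finset.sum_mul]
  refine Finset.sum_le_sum fun ⟨i, j⟩ hij ↦ ?_
  obtain rfl : i + j = n := mem_antidiagonal.1 hij
  calc catalan i * catalan j * c * d ^ (i + j)
      = c * (catalan i * d ^ i) * (catalan j * d ^ j) := by ring
    _ ≤ (∑ _u : ↥(G.neighborSet v \ X), catalan i * d ^ i) * (catalan j * d ^ j) := by
        rw [Finset.sum_const, Finset.card_univ, smul_eq_mul]; gcongr
    _ ≤ (∑ u : ↥(G.neighborSet v \ X), Nat.card (OfSize G {v} u i)) *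
          Nat.card (OfSize G X v j) := by
        gcongr with u
        · exact hfirst u i (by omega)
        · exact hrest j (by omega)

lemma card_ofSize_le {D : ℕ} (hD : ∀ v, G.degree v ≤ D) (X : Set V) (v : V) (n : ℕ) :
    Nat.card (OfSize G X v n) ≤ catalan n * D ^ n := by
  induction n using Nat.strong_induction_on generalizing X v with
  | _ n ih =>
    cases n with
    | zero => simp
    | succ n =>
      have hnbr : (G.neighborSet v \ X).ncard ≤ D :=
        (Set.ncard_le_ncard Set.sdiff_subset).trans <|
          (ncard_neighborSet_eq_degree (G := G) v).trans_le (hD v)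
      calc Nat.card (OfSize G X v (n + 1)) ≤ catalan (n + 1) * D * D ^ n :=
            card_ofSize_succ_le hnbr (fun u i hi ↦ ih i (by omega) {v} u)
              fun j hj ↦ ih j (by omega) X v
        _ = catalan (n + 1) * D ^ (n + 1) := by ring

lemma le_card_ofSize {d : ℕ} (hd : ∀ v, d ≤ G.degree v) (hX : X.Subsingleton) (v : V) (n : ℕ) :
    catalan n * (d - 1) ^ n ≤ Nat.card (OfSize G X v n) := by
  induction n using Nat.strong_induction_on generalizing X v with
  | _ n ih =>
    cases n with
    | zero => simp
    | succ n =>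
      have hnbr : d - 1 ≤ (G.neighborSet v \ X).ncard :=
        (Nat.sub_le_sub_right (hd v) 1).trans (degree_sub_one_le_ncard_neighborSet_sdiff v hX)
      calc catalan (n + 1) * (d - 1) ^ (n + 1)
          = catalan (n + 1) * (d - 1) * (d - 1) ^ n := by ring
        _ ≤ Nat.card (OfSize G X v (n + 1)) :=
            le_card_ofSize_succ hnbr (fun u i hi ↦ ih i (by omega) Set.subsingleton_singleton u)
              fun j hj ↦ ih j (by omega) hX v

/-- At the base point no neighbour is forbidden, which improves one factor `d - 1` to `d`. -/
lemma le_card_ofSize_succ_empty {d : ℕ} (hd : ∀ v, d ≤ G.degree v) (v : V) (n : ℕ) :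
    catalan (n + 1) * d * (d - 1) ^ n ≤ Nat.card (OfSize G ∅ v (n + 1)) := by
  refine le_card_ofSize_succ ?_ (fun u i _ ↦ le_card_ofSize hd Set.subsingleton_singleton u i)
    fun j _ ↦ le_card_ofSize hd Set.subsingleton_empty v j
  rw [Set.sdiff_empty, ncard_neighborSet_eq_degree]
  exact hd v

lemma cycleFreeClosedWalkCount_le_card_ofSize (v : V) (n : ℕ) :
    G.cycleFreeClosedWalkCount v (2 * n) ≤ Nat.card (OfSize G ∅ v n) := by
  have hcode (p : {p : G.Walk v v // p.length = 2 * n ∧ p.toSubgraph.coe.IsAcyclic}) :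
      ∃ t : OfSize G ∅ v n, t.1.toWalk = p.1 := by
    obtain ⟨p, hlen, hp⟩ := p
    rw [isAcyclic_coe_iff_isAcyclic_spanningCoe] at hp
    obtain ⟨t, rfl⟩ := exists_toWalk_eq (X := ∅) hp p (fun e he ↦ by simpa using he) (by simp)
    exact ⟨⟨t, by rw [length_toWalk] at hlen; omega⟩, rfl⟩
  choose code hcode using hcode
  refine Nat.card_le_card_of_injective code fun p q h ↦ Subtype.ext ?_
  rw [← hcode p, h, hcode q]

lemma card_ofSize_le_cycleFreeClosedWalkCount {n : ℕ} (hn : n < G.egirth) (v : V) :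
    Nat.card (OfSize G ∅ v n) ≤ G.cycleFreeClosedWalkCount v (2 * n) := by
  classical
  let walk (t : OfSize G ∅ v n) :
      {p : G.Walk v v // p.length = 2 * n ∧ p.toSubgraph.coe.IsAcyclic} :=
    ⟨t.1.toWalk, by rw [length_toWalk, t.2], t.1.isAcyclic_toSubgraph_toWalk (by rwa [t.2])⟩
  have : Finite {p : G.Walk v v // p.length = 2 * n ∧ p.toSubgraph.coe.IsAcyclic} :=
    Finite.Set.subset {p : G.Walk v v | p.length = 2 * n} fun _ hp ↦ hp.1
  exact Nat.card_le_card_of_injective walk fun t t' e ↦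
    Subtype.ext (toWalk_injective (congrArg Subtype.val e))

end ExcursionTree

theorem cycleFree_closedWalk_count_bounds_general {V : Type*} (G : SimpleGraph V)
    [G.LocallyFinite] {s d D : ℕ} (hs : 1 ≤ s) (hd : ∀ v, d ≤ G.degree v)
    (hD : ∀ v, G.degree v ≤ D) (v : V) :
    ((s : ℕ∞) < G.egirth →
        catalan s * d * (d - 1) ^ (s - 1) ≤ G.cycleFreeClosedWalkCount v (2 * s)) ∧
      G.cycleFreeClosedWalkCount v (2 * s) ≤ catalan s * D ^ s := by
  refine ⟨fun hgirth ↦ ?_, (ExcursionTree.cycleFreeClosedWalkCount_le_card_ofSize v s).trans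
    (ExcursionTree.card_ofSize_le hD ∅ v s)⟩
  obtain ⟨n, rfl⟩ := Nat.exists_eq_add_of_le' hs
  exact (ExcursionTree.le_card_ofSize_succ_empty hd v n).trans
    (ExcursionTree.card_ofSize_le_cycleFreeClosedWalkCount hgirth v)

/-- Let `s ≥ 1`, `k ≥ 2` and let `G` be a `k`-regular simple graph of girth at least
`2s - 1`. Then for every vertex `v`, the number `N` of cycle-free closed walks of
length `2s` based at `v` satisfies `C_s · k · (k-1)^(s-1) ≤ N ≤ C_s · k^s`, where
`C_s` is the `s`-th Catalan number. -/
theorem cycleFree_closedWalk_count_bounds (s k : ℕ) (hs : 1 ≤ s) (hk : 2 ≤ k)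
    {V : Type*} (G : SimpleGraph V) (hreg : ∀ v : V, (G.neighborSet v).ncard = k)
    (hgirth : ((2 * s - 1 : ℕ) : ℕ∞) ≤ G.egirth) (v : V) :
    catalan s * k * (k - 1) ^ (s - 1) ≤ G.cycleFreeClosedWalkCount v (2 * s) ∧
      G.cycleFreeClosedWalkCount v (2 * s) ≤ catalan s * k ^ s := by
  have : G.LocallyFinite := fun w ↦
    (Set.finite_of_ncard_pos (by rw [hreg]; omega : 0 < (G.neighborSet w).ncard)).fintype
  have hdeg (w : V) : G.degree w = k := by rw [← ncard_neighborSet_eq_degree, hreg]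
  exact (cycleFree_closedWalk_count_bounds_general G hs (fun w ↦ (hdeg w).ge)
    (fun w ↦ (hdeg w).le) v).imp_left (· (lt_egirth_of_two_mul_sub_one_le_egirth hgirth))
end

section
/- Let s ≥ 1, k ≥ 2, and let G and H be k-regular simple graphs each of girth at least 2s−1. Then for every vertex u of G and every vertex v of H, the number of cycle-free closed walks of length 2s based at u in G equals the number of cycle-free closed walks of length 2s based at v in H; in particular, this number depends only on k and s. -/
/-!
Deleting backtracks `a → b → a` from a walk until none is left gives its reduced walk. Prepending an
edge followed by cancellation is a bijection between the reduced walks from its two ends, so in a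
`k`-regular graph the number of walks of length `n` with reduced walk `r` satisfies a recursion
involving only `k`, `n` and the length of `r`. It remains to see that, below twice the girth, the
cycle-free closed walks are those with trivial reduced walk:

* in an acyclic graph reduced walks are paths, and a closed path is trivial;
* an edge of a closed walk that cancels completely is traversed at least twice, so such a walk of
  length `l` has at most `l / 2` distinct edges, too few for a cycle when `l` is less than twice the
  girth.
-/

open SimpleGraph

section

variable {V V' : Type*} {G : SimpleGraph V} {G' : SimpleGraph V'} {v w x : V}

open Classical in
/-- The walk obtained by prepending the edge `h` to `r`, or, if `r` starts by traversing this edge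
in the opposite direction, by deleting that first step of `r`. -/
noncomputable def cancelCons (h : G.Adj v x) (r : G.Walk x w) : G.Walk v w :=
  if e : r.snd = v then r.tail.copy e rfl else .cons h r

/-- A walk is reduced if it never traverses an edge and then immediately returns along it. -/
def IsReducedWalk : {v w : V} → G.Walk v w → Prop
  | _, _, .nil => True
  | v, _, .cons _ r => r.snd ≠ v ∧ IsReducedWalk r

/-- The walk that remains of a walk when its backtracks are cancelled, starting from its end. -/
noncomputable def reducedWalk : {v w : V} → G.Walk v w → G.Walk v w
  | _, _, .nil => .nil
  | _, _, .cons h p => cancelCons h (reducedWalk p)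

theorem cancelCons_of_snd_ne (h : G.Adj v x) {r : G.Walk x w} (hr : r.snd ≠ v) :
    cancelCons h r = .cons h r :=
  dif_neg hr

theorem cancelCons_cons (h : G.Adj v x) (h' : G.Adj x v) (r : G.Walk v w) :
    cancelCons h (.cons h' r) = r := by
  rw [cancelCons, dif_pos (Walk.snd_cons r h'), Walk.tail_cons]
  exact Walk.copy_copy ..

theorem snd_ne_or_exists_eq_cons (h : G.Adj v x) (r : G.Walk x w) :
    r.snd ≠ v ∨ ∃ r' : G.Walk v w, r = .cons h.symm r' := by
  cases r with
  | nil => exact .inl h.ne'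
  | @cons _ y _ h' r =>
    by_cases hyv : y = v
    · subst hyv
      exact .inr ⟨r, rfl⟩
    · exact .inl (by rwa [Walk.snd_cons])

theorem isReducedWalk_cancelCons (h : G.Adj v x) {r : G.Walk x w} (hr : IsReducedWalk r) :
    IsReducedWalk (cancelCons h r) := by
  obtain hne | ⟨r, rfl⟩ := snd_ne_or_exists_eq_cons h r
  · rw [cancelCons_of_snd_ne h hne]
    exact ⟨hne, hr⟩
  · rw [cancelCons_cons]
    exact hr.2

theorem cancelCons_symm_cancelCons (h : G.Adj v x) {r : G.Walk x w} (hr : IsReducedWalk r) :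
    cancelCons h.symm (cancelCons h r) = r := by
  obtain hne | ⟨r, rfl⟩ := snd_ne_or_exists_eq_cons h r
  · rw [cancelCons_of_snd_ne h hne, cancelCons_cons]
  · rw [cancelCons_cons, cancelCons_of_snd_ne h.symm hr.1]

theorem isReducedWalk_reducedWalk (p : G.Walk v w) : IsReducedWalk (reducedWalk p) := by
  induction p with
  | nil => trivial
  | cons h p ih => exact isReducedWalk_cancelCons h ih

theorem reducedWalk_cons_eq_iff (h : G.Adj v x) {p : G.Walk x w} {r : G.Walk v w}
    (hr : IsReducedWalk r) :
    reducedWalk (.cons h p) = r ↔ reducedWalk p = cancelCons h.symm r := by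
  constructor
  · rintro rfl
    exact (cancelCons_symm_cancelCons h (isReducedWalk_reducedWalk p)).symm
  · intro hp
    rw [reducedWalk, hp]
    exact cancelCons_symm_cancelCons h.symm hr

theorem cancelCons_map {f : G →g G'} (hf : Function.Injective f) (h : G.Adj v x)
    (r : G.Walk x w) : cancelCons (f.map_adj h) (r.map f) = (cancelCons h r).map f := by
  obtain hne | ⟨r, rfl⟩ := snd_ne_or_exists_eq_cons h r
  · rw [cancelCons_of_snd_ne h hne, cancelCons_of_snd_ne _ (by simpa [hf.eq_iff] using hne),
      Walk.map_cons]
  · rw [Walk.map_cons, cancelCons_cons, cancelCons_cons]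

theorem reducedWalk_map {f : G →g G'} (hf : Function.Injective f) (p : G.Walk v w) :
    reducedWalk (p.map f) = (reducedWalk p).map f := by
  induction p with
  | nil => rfl
  | cons h p ih => rw [Walk.map_cons, reducedWalk, reducedWalk, ih, cancelCons_map hf]

theorem isPath_cancelCons (hG : G.IsAcyclic) {r : G.Walk x w} (hr : r.IsPath)
    (h : G.Adj v x) : (cancelCons h r).IsPath := by
  obtain hne | ⟨r, rfl⟩ := snd_ne_or_exists_eq_cons h r
  · rw [cancelCons_of_snd_ne h hne]
    exact hr.cons fun hv => hne (hG.eq_snd_of_adj_start hr h.symm hv).symm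
  · rw [cancelCons_cons]
    exact hr.of_cons

theorem isPath_reducedWalk (hG : G.IsAcyclic) (p : G.Walk v w) : (reducedWalk p).IsPath := by
  induction p with
  | nil => exact .nil
  | cons h p ih => exact isPath_cancelCons hG ih h

theorem edgeSet_cancelCons_subset (h : G.Adj v x) (r : G.Walk x w) :
    (cancelCons h r).edgeSet ⊆ insert s(v, x) r.edgeSet := by
  obtain hne | ⟨r, rfl⟩ := snd_ne_or_exists_eq_cons h r
  · rw [cancelCons_of_snd_ne h hne, Walk.edgeSet_cons]
  · rw [cancelCons_cons, Walk.edgeSet_cons]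
    exact (Set.subset_insert _ _).trans (Set.subset_insert _ _)

theorem edgeSet_reducedWalk_subset (p : G.Walk v w) : (reducedWalk p).edgeSet ⊆ p.edgeSet := by
  induction p with
  | nil => rfl
  | cons h p ih =>
    rw [Walk.edgeSet_cons]
    exact (edgeSet_cancelCons_subset h _).trans (Set.insert_subset_insert ih)

theorem two_mul_encard_edgeSet_le (p : G.Walk v w) :
    2 * p.edgeSet.encard ≤ p.length + (reducedWalk p).length := by
  induction p with
  | nil => simp
  | @cons v x w h p ih =>
    rw [Walk.edgeSet_cons, reducedWalk]
    obtain hne | ⟨r, hr⟩ := snd_ne_or_exists_eq_cons h (reducedWalk p)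
    · rw [cancelCons_of_snd_ne h hne]
      calc 2 * (insert s(v, x) p.edgeSet).encard
          ≤ 2 * (p.edgeSet.encard + 1) := by gcongr; exact Set.encard_insert_le _ _
        _ = 2 * p.edgeSet.encard + 2 := by ring
        _ ≤ p.length + (reducedWalk p).length + 2 := by gcongr
        _ = _ := by push_cast [Walk.length_cons]; ring
    · have hmem : s(v, x) ∈ p.edgeSet :=
        edgeSet_reducedWalk_subset p (by simp [hr, Sym2.eq_swap])
      rw [Set.insert_eq_of_mem hmem]
      rw [hr] at ih ⊢
      rw [cancelCons_cons]
      refine ih.trans_eq ?_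
      push_cast [Walk.length_cons]
      ring

theorem isAcyclic_coe_of_encard_edgeSet_lt_egirth {S : G.Subgraph}
    (hS : S.edgeSet.encard < G.egirth) : S.coe.IsAcyclic := by
  classical
  intro a c hc
  have hc' : (c.map S.hom).IsCycle := hc.map Subgraph.hom_injective
  have hsub : (c.map S.hom).edgeSet ⊆ S.edgeSet := by
    rw [Walk.edgeSet_map]
    rintro _ ⟨e, he, rfl⟩
    have hadj : e ∈ S.coe.edgeSet := c.edges_subset_edgeSet he
    induction e with
    | h x y => exact hadj
  have hcard : (c.map S.hom).edgeSet.encard = (c.map S.hom).length := by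
    rw [← Walk.coe_edges_toFinset, Set.encard_coe_eq_coe_finsetCard,
      List.toFinset_card_of_nodup hc'.edges_nodup, Walk.length_edges]
  exact (hcard ▸ Set.encard_le_encard hsub).not_gt (hS.trans_le (egirth_le_length hc'))

theorem isAcyclic_toSubgraph_iff_reducedWalk_eq_nil {p : G.Walk v v}
    (hp : (p.length : ℕ∞) < 2 * G.egirth) :
    p.toSubgraph.coe.IsAcyclic ↔ reducedWalk p = .nil := by
  constructor
  · intro hacyc
    have hnil : reducedWalk p.mapToSubgraph = .nil :=
      (Walk.isPath_iff_nil.mp (isPath_reducedWalk hacyc _)).eq_nil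
    have hmap := reducedWalk_map Subgraph.hom_injective p.mapToSubgraph
    rw [Walk.map_mapToSubgraph_hom, hnil] at hmap
    exact hmap
  · intro hnil
    have hle : 2 * p.edgeSet.encard ≤ p.length := by
      simpa [hnil] using two_mul_encard_edgeSet_le p
    apply isAcyclic_coe_of_encard_edgeSet_lt_egirth
    rw [Walk.edgeSet_toSubgraph]
    exact lt_of_mul_lt_mul_left' (hle.trans_lt hp)

/-- Splitting off the first step of a walk with a given reduced walk. -/
def consReducedWalkEquiv {r : G.Walk v w} (hr : IsReducedWalk r) (n : ℕ) :
    {p : G.Walk v w // p.length = n + 1 ∧ reducedWalk p = r} ≃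
      Σ x : G.neighborSet v,
        {q : G.Walk x w // q.length = n ∧ reducedWalk q = cancelCons (G.adj_symm x.2) r} where
  toFun
    | ⟨.cons (v := x) h q, hq⟩ =>
      ⟨⟨x, h⟩, q, Nat.succ_injective hq.1, (reducedWalk_cons_eq_iff h hr).mp hq.2⟩
  invFun y :=
    ⟨.cons y.1.2 y.2.1, congrArg _ y.2.2.1, (reducedWalk_cons_eq_iff y.1.2 hr).mpr y.2.2.2⟩
  left_inv := by
    rintro ⟨_ | ⟨h, q⟩, hq⟩
    · simp at hq
    · rfl
  right_inv _ := rfl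

/-- The number of walks of length `n` whose reduced walk is a given one of length `m`, in a
`k`-regular graph, as a function of `n` and `m`. -/
def reductionCount (k : ℕ) : ℕ → ℕ → ℕ
  | 0, 0 => 1
  | 0, _ + 1 => 0
  | n + 1, 0 => k * reductionCount k n 1
  | n + 1, m + 1 => reductionCount k n m + (k - 1) * reductionCount k n (m + 2)

section LocallyFinite

variable [G.LocallyFinite] {k : ℕ}

instance finite_walk_length_reducedWalk (n : ℕ) (r : G.Walk v w) :
    Finite {p : G.Walk v w // p.length = n ∧ reducedWalk p = r} := by
  classical
  exact Finite.of_injective (β := {p : G.Walk v w // p.length = n}) (fun p => ⟨p.1, p.2.1⟩)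
    fun _ _ hpq => Subtype.ext (Subtype.mk.inj hpq)

theorem sum_length_cancelCons_nil (hreg : G.IsRegularOfDegree k) (f : ℕ → ℕ) (v : V) :
    ∑ y : G.neighborSet v, f (cancelCons (G.adj_symm y.2) (.nil : G.Walk v v)).length =
      k * f 1 := by
  have hlen (y : G.neighborSet v) :
      (cancelCons (G.adj_symm y.2) (.nil : G.Walk v v)).length = 1 := by
    have hne : (.nil : G.Walk v v).snd ≠ y := G.ne_of_adj y.2
    rw [cancelCons_of_snd_ne _ hne]
    rfl
  rw [Finset.sum_congr rfl fun y _ => congrArg f (hlen y), Finset.sum_const, Finset.card_univ,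
    G.card_neighborSet_eq_degree, hreg.degree_eq, smul_eq_mul]

theorem sum_length_cancelCons_cons (hreg : G.IsRegularOfDegree k) (f : ℕ → ℕ) (h : G.Adj v x)
    (r : G.Walk x w) :
    ∑ y : G.neighborSet v, f (cancelCons (G.adj_symm y.2) (.cons h r)).length =
      f r.length + (k - 1) * f (r.length + 2) := by
  classical
  have hback : (cancelCons h.symm (.cons h r)).length = r.length := by rw [cancelCons_cons]
  have hstep (y : G.neighborSet v) (hy : y ∈ Finset.univ.erase ⟨x, h⟩) :
      f (cancelCons (G.adj_symm y.2) (.cons h r)).length = f (r.length + 2) := by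
    have hyx : (Walk.cons h r).snd ≠ y := by
      rw [Walk.snd_cons]
      rintro rfl
      exact Finset.ne_of_mem_erase hy rfl
    rw [cancelCons_of_snd_ne _ hyx]
    rfl
  rw [← Finset.add_sum_erase _ _ (Finset.mem_univ ⟨x, h⟩), hback, Finset.sum_congr rfl hstep,
    Finset.sum_const, Finset.card_erase_of_mem (Finset.mem_univ _), Finset.card_univ,
    G.card_neighborSet_eq_degree, hreg.degree_eq, smul_eq_mul]

theorem card_walk_length_reducedWalk (hreg : G.IsRegularOfDegree k) (n : ℕ) {r : G.Walk v w}
    (hr : IsReducedWalk r) :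
    Nat.card {p : G.Walk v w // p.length = n ∧ reducedWalk p = r} =
      reductionCount k n r.length := by
  induction n generalizing v with
  | zero =>
    cases r with
    | nil =>
      have : Unique {p : G.Walk w w // p.length = 0 ∧ reducedWalk p = .nil} :=
        { default := ⟨.nil, rfl, rfl⟩
          uniq := fun p => Subtype.ext (Walk.length_eq_zero_iff.mp p.2.1).eq_nil }
      exact Nat.card_unique
    | cons h r =>
      have : IsEmpty {p : G.Walk _ w // p.length = 0 ∧ reducedWalk p = .cons h r} := by
        refine ⟨?_⟩
        rintro ⟨_ | _, hlen, hred⟩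
        · cases hred
        · exact Nat.succ_ne_zero _ hlen
      exact Nat.card_of_isEmpty
  | succ n ih =>
    rw [Nat.card_congr (consReducedWalkEquiv hr n), Nat.card_sigma,
      Finset.sum_congr rfl fun x _ => ih (isReducedWalk_cancelCons (G.adj_symm x.2) hr)]
    cases r with
    | nil => exact sum_length_cancelCons_nil hreg (reductionCount k n) _
    | cons h r => exact sum_length_cancelCons_cons hreg (reductionCount k n) h r

theorem cycleFreeClosedWalkCount_eq_reductionCount (hreg : G.IsRegularOfDegree k) {l : ℕ}
    (hl : (l : ℕ∞) < 2 * G.egirth) (v : V) :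
    G.cycleFreeClosedWalkCount v l = reductionCount k l 0 := by
  rw [← Walk.length_nil (G := G) (u := v),
    ← card_walk_length_reducedWalk hreg l (r := .nil' v) True.intro]
  refine Nat.card_congr (Equiv.subtypeEquivRight fun p => and_congr_right ?_)
  rintro rfl
  exact isAcyclic_toSubgraph_iff_reducedWalk_eq_nil hl

end LocallyFinite

theorem exists_locallyFinite_isRegularOfDegree {k : ℕ} (hk : 0 < k)
    (hreg : ∀ v : V, (G.neighborSet v).ncard = k) :
    ∃ _ : G.LocallyFinite, G.IsRegularOfDegree k := by
  have hfin (v : V) : (G.neighborSet v).Finite :=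
    Set.finite_of_ncard_pos (hk.trans_eq (hreg v).symm)
  have hlocfin : G.LocallyFinite := fun v => (hfin v).fintype
  refine ⟨hlocfin, fun v => ?_⟩
  rw [← G.card_neighborSet_eq_degree, ← Nat.card_eq_fintype_card, Nat.card_coe_set_eq, hreg]

theorem two_mul_lt_two_mul_egirth {s : ℕ} (h : ((2 * s - 1 : ℕ) : ℕ∞) ≤ G.egirth) :
    ((2 * s : ℕ) : ℕ∞) < 2 * G.egirth := by
  have h3 : 3 ≤ G.egirth := three_le_egirth
  cases hg : G.egirth with
  | top =>
    rw [ENat.mul_top two_ne_zero]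
    exact ENat.natCast_lt_top _
  | coe g =>
    rw [hg] at h h3
    norm_cast at *
    lia

end

theorem cycleFree_closedWalk_count_independent_general (k l : ℕ) (hk : 0 < k)
    {V W : Type*} (G : SimpleGraph V) (H : SimpleGraph W)
    (hregG : ∀ v : V, (G.neighborSet v).ncard = k)
    (hregH : ∀ w : W, (H.neighborSet w).ncard = k)
    (hgirthG : (l : ℕ∞) < 2 * G.egirth) (hgirthH : (l : ℕ∞) < 2 * H.egirth) (u : V) (v : W) :
    G.cycleFreeClosedWalkCount u l = H.cycleFreeClosedWalkCount v l := by
  obtain ⟨_, hG⟩ := exists_locallyFinite_isRegularOfDegree hk hregG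
  obtain ⟨_, hH⟩ := exists_locallyFinite_isRegularOfDegree hk hregH
  rw [cycleFreeClosedWalkCount_eq_reductionCount hG hgirthG,
    cycleFreeClosedWalkCount_eq_reductionCount hH hgirthH]

/-- Let `s ≥ 1`, `k ≥ 2`, and let `G` and `H` be `k`-regular simple graphs, each of
girth at least `2s - 1`. Then the number of cycle-free closed walks of length `2s`
based at any vertex `u` of `G` equals the number of cycle-free closed walks of length
`2s` based at any vertex `v` of `H`: this number depends only on `k` and `s`. -/
theorem cycleFree_closedWalk_count_independent (s k : ℕ) (hs : 1 ≤ s) (hk : 2 ≤ k)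
    {V W : Type*} (G : SimpleGraph V) (H : SimpleGraph W)
    (hregG : ∀ v : V, (G.neighborSet v).ncard = k)
    (hregH : ∀ w : W, (H.neighborSet w).ncard = k)
    (hgirthG : ((2 * s - 1 : ℕ) : ℕ∞) ≤ G.egirth)
    (hgirthH : ((2 * s - 1 : ℕ) : ℕ∞) ≤ H.egirth)
    (u : V) (v : W) :
    G.cycleFreeClosedWalkCount u (2 * s) = H.cycleFreeClosedWalkCount v (2 * s) :=
  cycleFree_closedWalk_count_independent_general k (2 * s) (by lia) G H hregG hregH
    (two_mul_lt_two_mul_egirth hgirthG) (two_mul_lt_two_mul_egirth hgirthH) u v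
end

section
/- Let k ≥ 3 and let G be an egr(n,k,g,λ) graph with g even and g ≡ 2 (mod 4). Suppose c is a natural number such that for every vertex v of G the number of cycle-free closed walks of length g based at v equals c. Then n·(c + kλ) ≥ c + kλ + k^g. -/
/-!
Write `A` for the adjacency matrix and `g = 2 * m` with `m` odd. The row of `A ^ m` at `v` sums to
`k ^ m`, and its squares sum to the number of closed walks of length `g` at `v`. The diagonal entry
`(A ^ m) v v` vanishes: a closed walk shorter than the girth runs in a forest, so its length is
even. Hence Cauchy–Schwarz may be applied to only `n - 1` entries, and gives
`k ^ g ≤ (n - 1) * (number of closed walks of length g at v)`.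

A closed walk of length `g` that is not cycle-free carries a cycle, of length at least `g`, so it is
that cycle. Counting pairs (cycle through `v`, edge of the cycle at `v`) in two ways gives `k * lam`
such walks.
-/

open SimpleGraph

namespace EdgeGirthRegular

section CauchySchwarz

variable {ι R : Type*} [Fintype ι] [CommSemiring R] [LinearOrder R] [IsStrictOrderedRing R]
  [ExistsAddOfLE R]

lemma sum_sq_add_sq_sum_le_card_mul_sum_sq {f : ι → R} {i : ι} (hi : f i = 0) :
    ∑ j, f j ^ 2 + (∑ j, f j) ^ 2 ≤ Fintype.card ι * ∑ j, f j ^ 2 := by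
  classical
  have hcard : (Fintype.card ι : R) = 1 + ((Finset.univ.erase i).card : R) := by
    rw [← Finset.card_univ, ← Finset.card_erase_add_one (Finset.mem_univ i), Nat.cast_add_one,
      add_comm]
  have hcs := sq_sum_le_card_mul_sum_sq (s := Finset.univ.erase i) (f := f)
  rw [Finset.sum_erase _ hi, Finset.sum_erase _ (by simp [hi])] at hcs
  rw [hcard, one_add_mul]
  gcongr

end CauchySchwarz

variable {V : Type*} {G : SimpleGraph V}

section Walks

variable {u v w x : V}

lemma length_le_of_isTrail_of_edges_subset {p : G.Walk u v} {q : G.Walk w x} (hq : q.IsTrail)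
    (hsub : q.edges ⊆ p.edges) : q.length ≤ p.length := by
  simpa only [Walk.length_edges] using (List.subperm_of_subset hq.edges_nodup hsub).length_le

lemma isCycle_of_edges_subset {p : G.Walk v v} {q : G.Walk w w} (hq : q.IsCycle)
    (hsub : q.edges ⊆ p.edges) (hlen : p.length ≤ q.length) : p.IsCycle := by
  have hp : ¬ p.Nil := by
    have := hq.three_le_length
    have := length_le_of_isTrail_of_edges_subset hq.isTrail hsub
    rw [← Walk.length_eq_zero_iff]
    lia
  have hedges : q.edges.Perm p.edges :=
    (List.subperm_of_subset hq.isTrail.edges_nodup hsub).perm_of_length_le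
      (by simpa only [Walk.length_edges] using hlen)
  have hsupport_sub : q.support.tail ⊆ p.support.tail := by
    intro y hy
    obtain ⟨e, he, hye⟩ := (Walk.mem_support_iff_exists_mem_edges_of_not_nil hq.not_nil).1
      (List.mem_of_mem_tail hy)
    have hyp : y ∈ p.support :=
      (Walk.mem_support_iff_exists_mem_edges_of_not_nil hp).2 ⟨e, hsub he, hye⟩
    obtain rfl | hyp := (Walk.mem_support_iff p).1 hyp
    · exact Walk.end_mem_tail_support hp
    · exact hyp
  have hsupport : q.support.tail.Perm p.support.tail :=
    (List.subperm_of_subset hq.support_nodup hsupport_sub).perm_of_length_le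
      (by simpa only [List.length_tail, Walk.length_support, Nat.add_sub_cancel] using hlen)
  exact (Walk.isCycle_def p).2 ⟨⟨hedges.nodup_iff.1 hq.isTrail.edges_nodup⟩,
    fun h ↦ hp (Walk.eq_nil_iff_nil.1 h), hsupport.nodup_iff.1 hq.support_nodup⟩

lemma exists_isCycle_edges_subset_of_not_isAcyclic {p : G.Walk u v}
    (hp : ¬ p.toSubgraph.coe.IsAcyclic) :
    ∃ (w : V) (q : G.Walk w w), q.IsCycle ∧ q.edges ⊆ p.edges := by
  simp only [IsAcyclic, not_forall, not_not] at hp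
  obtain ⟨w, q, hq⟩ := hp
  refine ⟨_, q.map p.toSubgraph.hom, hq.map p.toSubgraph.hom_injective, fun e he ↦ ?_⟩
  rw [Walk.edges_map, List.mem_map] at he
  obtain ⟨⟨a, b⟩, hab, rfl⟩ := he
  exact Walk.adj_toSubgraph_iff_mem_edges.1 (q.adj_of_mem_edges hab)

lemma not_isAcyclic_toSubgraph_of_isCycle {p : G.Walk v v} (hp : p.IsCycle) :
    ¬ p.toSubgraph.coe.IsAcyclic := by
  rw [← p.map_mapToSubgraph_hom] at hp
  exact fun hacyclic ↦ hacyclic p.mapToSubgraph hp.of_map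

lemma not_isAcyclic_toSubgraph_iff_isCycle {p : G.Walk v v} (hp : (p.length : ℕ∞) ≤ G.egirth) :
    ¬ p.toSubgraph.coe.IsAcyclic ↔ p.IsCycle := by
  refine ⟨fun h ↦ ?_, not_isAcyclic_toSubgraph_of_isCycle⟩
  obtain ⟨w, q, hq, hsub⟩ := exists_isCycle_edges_subset_of_not_isAcyclic h
  exact isCycle_of_edges_subset hq hsub (by exact_mod_cast hp.trans (egirth_le_length hq))

lemma even_length_of_isAcyclic_toSubgraph {p : G.Walk v v} (hp : p.toSubgraph.coe.IsAcyclic) :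
    Even p.length := by
  have hlen := congrArg Walk.length p.map_mapToSubgraph_hom
  rw [Walk.length_map] at hlen
  exact hlen ▸ two_colorable_iff_forall_loop_even.1 hp.colorable_two _ p.mapToSubgraph

lemma even_length_of_length_lt_egirth {p : G.Walk v v} (hp : (p.length : ℕ∞) < G.egirth) :
    Even p.length := by
  refine even_length_of_isAcyclic_toSubgraph (not_not.1 fun h ↦ ?_)
  exact hp.not_ge (egirth_le_length ((not_isAcyclic_toSubgraph_iff_isCycle hp.le).1 h))

lemma closedWalkCount_eq_zero_of_odd_of_lt_egirth {l : ℕ} (hodd : Odd l)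
    (hl : (l : ℕ∞) < G.egirth) : G.closedWalkCount v l = 0 := by
  have : IsEmpty {p : G.Walk v v // p.length = l} :=
    ⟨fun ⟨_, hp⟩ ↦ Nat.not_even_iff_odd.2 hodd (hp ▸ even_length_of_length_lt_egirth (hp ▸ hl))⟩
  exact Nat.card_of_isEmpty

end Walks

section Cycles

/-- The number of cycles of length `l` through `v`, each counted once for each of its two
orientations: as a closed walk, a cycle based at `v` has a direction. -/
noncomputable def basedCycleCount (G : SimpleGraph V) (v : V) (l : ℕ) : ℕ :=
  Nat.card {p : G.Walk v v // p.length = l ∧ p.IsCycle}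

variable [G.LocallyFinite]

lemma closedWalkCount_eq_cycleFreeClosedWalkCount_add_basedCycleCount {l : ℕ}
    (hl : (l : ℕ∞) ≤ G.egirth) (v : V) :
    G.closedWalkCount v l = G.cycleFreeClosedWalkCount v l + basedCycleCount G v l := by
  classical
  have hall : G.closedWalkCount v l = (G.finsetWalkLength l v v).card :=
    Nat.subtype_card _ fun _ ↦ mem_finsetWalkLength_iff
  have hfree : G.cycleFreeClosedWalkCount v l =
      {p ∈ G.finsetWalkLength l v v | p.toSubgraph.coe.IsAcyclic}.card :=
    Nat.subtype_card _ fun _ ↦ by rw [Finset.mem_filter, mem_finsetWalkLength_iff]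
  have hcycle : basedCycleCount G v l =
      {p ∈ G.finsetWalkLength l v v | ¬ p.toSubgraph.coe.IsAcyclic}.card := by
    refine Nat.subtype_card _ fun p ↦ ?_
    rw [Finset.mem_filter, mem_finsetWalkLength_iff]
    exact and_congr_right fun hp ↦ not_isAcyclic_toSubgraph_iff_isCycle (hp ▸ hl)
  rw [hall, hfree, hcycle, Finset.card_filter_add_card_filter_not]

lemma sum_card_cycles_through_edge (v : V) (l : ℕ) :
    ∑ u ∈ G.neighborFinset v,
        Nat.card {p : G.Walk v v // p.IsCycle ∧ p.length = l ∧ s(v, u) ∈ p.edges} =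
      2 * basedCycleCount G v l := by
  classical
  let cycles : Finset (G.Walk v v) := {p ∈ G.finsetWalkLength l v v | p.IsCycle}
  have mem_cycles (p : G.Walk v v) : p ∈ cycles ↔ p.length = l ∧ p.IsCycle := by
    rw [Finset.mem_filter, mem_finsetWalkLength_iff]
  have htwo : ∀ p ∈ cycles,
      ((G.neighborFinset v).bipartiteAbove (fun p u ↦ s(v, u) ∈ p.edges) p).card = 2 := by
    intro p hp
    rw [← ((mem_cycles p).1 hp).2.ncard_neighborSet_toSubgraph_eq_two p.start_mem_support,
      ← Set.ncard_coe_finset]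
    congr 1
    ext u
    rw [Finset.mem_coe, Finset.mem_bipartiteAbove, mem_neighborFinset, Subgraph.mem_neighborSet,
      Walk.adj_toSubgraph_iff_mem_edges]
    exact and_iff_right_of_imp p.adj_of_mem_edges
  have hthrough (u : V) :
      Nat.card {p : G.Walk v v // p.IsCycle ∧ p.length = l ∧ s(v, u) ∈ p.edges} =
        (cycles.bipartiteBelow (fun p u ↦ s(v, u) ∈ p.edges) u).card := by
    refine Nat.subtype_card _ fun p ↦ ?_
    rw [Finset.mem_bipartiteBelow, mem_cycles, and_assoc, and_left_comm]
  calc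
    _ = ∑ p ∈ cycles,
        ((G.neighborFinset v).bipartiteAbove (fun p u ↦ s(v, u) ∈ p.edges) p).card := by
      simp only [hthrough, Finset.sum_card_bipartiteAbove_eq_sum_card_bipartiteBelow]
    _ = 2 * cycles.card := by rw [Finset.sum_const_nat htwo, mul_comm]
    _ = 2 * basedCycleCount G v l := by rw [basedCycleCount, Nat.subtype_card cycles mem_cycles]

lemma basedCycleCount_eq_degree_mul {v : V} {l lam : ℕ}
    (hlam : ∀ u, G.Adj v u →
      Nat.card {p : G.Walk v v // p.IsCycle ∧ p.length = l ∧ s(v, u) ∈ p.edges} = 2 * lam) :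
    basedCycleCount G v l = G.degree v * lam := by
  have hsum := sum_card_cycles_through_edge (G := G) v l
  rw [Finset.sum_const_nat fun u hu ↦ hlam u ((G.mem_neighborFinset v u).1 hu),
    card_neighborFinset_eq_degree] at hsum
  lia

end Cycles

section AdjacencyMatrix

variable [Fintype V] [DecidableRel G.Adj]

lemma sum_adjMatrix_pow_apply [DecidableEq V] {R : Type*} [Semiring R] {k : ℕ}
    (hreg : G.IsRegularOfDegree k) (m : ℕ) (v : V) :
    ∑ u, (G.adjMatrix R ^ m) v u = (k : R) ^ m := by
  induction m generalizing v with
  | zero => simp [Matrix.one_apply]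
  | succ m ih =>
    simp only [pow_succ', adjMatrix_mul_apply]
    rw [Finset.sum_comm]
    simp [ih, hreg.degree_eq]

lemma adjMatrix_pow_apply_self_eq_closedWalkCount [DecidableEq V] (l : ℕ) (v : V) :
    (G.adjMatrix ℕ ^ l) v v = G.closedWalkCount v l := by
  rw [adjMatrix_pow_apply_eq_card_walk, Nat.cast_id, ← Nat.card_eq_fintype_card]
  rfl

lemma sum_adjMatrix_pow_apply_sq [DecidableEq V] (m : ℕ) (v : V) :
    ∑ u, (G.adjMatrix ℕ ^ m) v u ^ 2 = G.closedWalkCount v (2 * m) := by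
  rw [← adjMatrix_pow_apply_self_eq_closedWalkCount, two_mul, pow_add, Matrix.mul_apply]
  simp only [(G.isSymm_adjMatrix.pow m).apply, sq]

lemma closedWalkCount_add_pow_le_card_mul {k m : ℕ} {v : V} (hreg : G.IsRegularOfDegree k)
    (hm : G.closedWalkCount v m = 0) :
    G.closedWalkCount v (2 * m) + k ^ (2 * m) ≤ Fintype.card V * G.closedWalkCount v (2 * m) := by
  classical
  have hdiag : (G.adjMatrix ℕ ^ m) v v = 0 := by
    rw [adjMatrix_pow_apply_self_eq_closedWalkCount, hm]
  simpa only [sum_adjMatrix_pow_apply_sq, sum_adjMatrix_pow_apply hreg, Nat.cast_id, ← pow_mul',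
    mul_comm m 2] using sum_sq_add_sq_sum_le_card_mul_sum_sq hdiag

end AdjacencyMatrix

end EdgeGirthRegular

open EdgeGirthRegular

theorem egr_even_girth_2mod4_lower_bound_general {V : Type*} [Finite V] {G : SimpleGraph V}
    {n k g lam c : ℕ} (hn : Nat.card V = n) (hreg : ∀ w, (G.neighborSet w).ncard = k)
    (hg : g % 4 = 2) (hgirth : (g : ℕ∞) ≤ G.egirth) (v : V)
    (hlam : ∀ u, G.Adj v u →
      Nat.card {p : G.Walk v v // p.IsCycle ∧ p.length = g ∧ s(v, u) ∈ p.edges} = 2 * lam)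
    (hc : G.cycleFreeClosedWalkCount v g = c) :
    n * (c + k * lam) ≥ c + k * lam + k ^ g := by
  classical
  have := Fintype.ofFinite V
  have hdeg : G.IsRegularOfDegree k := fun w ↦ by
    rw [← hreg w, Set.ncard_eq_toFinset_card', degree, neighborFinset]
  have hwalks : G.closedWalkCount v g = c + k * lam := by
    rw [closedWalkCount_eq_cycleFreeClosedWalkCount_add_basedCycleCount hgirth,
      basedCycleCount_eq_degree_mul hlam, hdeg.degree_eq, hc]
  obtain ⟨m, rfl⟩ : 2 ∣ g := by lia
  have hm : Odd m := Nat.odd_iff.2 (by lia)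
  have hm_lt : (m : ℕ∞) < G.egirth :=
    lt_of_lt_of_le (by exact_mod_cast (by lia : m < 2 * m)) hgirth
  have hbound := closedWalkCount_add_pow_le_card_mul hdeg
    (closedWalkCount_eq_zero_of_odd_of_lt_egirth (v := v) hm hm_lt)
  rwa [hwalks, ← Nat.card_eq_fintype_card, hn] at hbound

/-- Let `k ≥ 3` and let `G` be an `egr(n, k, g, λ)` graph with `g ≡ 2 (mod 4)`
(in particular `g` is even). If every vertex of `G` lies on exactly `c` cycle-free
closed walks of length `g`, then `n(c + kλ) ≥ c + kλ + k^g`. -/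
theorem egr_even_girth_2mod4_lower_bound (n k g lam c : ℕ) (hk : 3 ≤ k)
    (hg : g % 4 = 2) {V : Type*} (G : SimpleGraph V) (h : G.IsEGR n k g lam)
    (hc : ∀ v : V, G.cycleFreeClosedWalkCount v g = c) :
    n * (c + k * lam) ≥ c + k * lam + k ^ g := by
  obtain ⟨_, hn, hreg, hgirth, hlam⟩ := h
  obtain ⟨v, -⟩ := (exists_egirth_eq_length (G := G)).2 (by simp [← egirth_eq_top, hgirth])
  exact egr_even_girth_2mod4_lower_bound_general hn hreg hg hgirth.ge v (hlam v) (hc v)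
end

section
/- Let k ≥ 3 and let G be a bipartite egr(n,k,g,λ) graph with g even and g ≡ 2 (mod 4). Suppose c is a natural number such that for every vertex v of G the number of cycle-free closed walks of length g based at v equals c. Then n·(c + kλ) ≥ 2k^g. -/
/-!
Let `A` be the adjacency matrix and write `g = 2m`, the girth of a bipartite graph being even. Walks
of length `m` from a vertex `v` all end in one colour class, which holds half of the vertices by
regularity. There are `k ^ m` of them, so Cauchy–Schwarz gives
`(k ^ m) ^ 2 ≤ (n / 2) * ∑ w, ((A ^ m) v w) ^ 2 = (n / 2) * (A ^ g) v v`.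

A closed walk of length `g` whose edges contain a cycle must use up all its steps on that cycle, so
it is itself a cycle. Each cycle through `v` leaves `v` along two of its `k` edges, each of which is
traversed by `2 * lam` of the rooted cycles at `v`, so `v` is the root of exactly `k * lam` of them.
Hence `(A ^ g) v v` is the number of cycle-free closed walks at `v` plus `k * lam`, and the bound
holds at every single vertex.
-/

open SimpleGraph

/-- The number of rooted cycles of length `l` at `v`, i.e. of closed walks based at `v` that run
once around a cycle. A cycle through `v` is counted twice, once for each direction. -/
noncomputable def rootedCycleCount {V : Type*} (G : SimpleGraph V) (v : V) (l : ℕ) : ℕ :=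
  Nat.card {p : G.Walk v v // p.length = l ∧ p.IsCycle}

open scoped Finset

section ShortClosedWalks

variable {V : Type*} {G : SimpleGraph V} {u v : V}

lemma isCycle_of_edges_subset {p : G.Walk v v} {c : G.Walk u u} (hc : c.IsCycle)
    (hcp : c.edges ⊆ p.edges) (hlen : p.length ≤ c.length) : p.IsCycle := by
  have hpos : ¬ p.Nil := by
    intro hp
    have hnil : c.edges = [] := List.subset_nil.mp (by simpa [hp.eq_nil] using hcp)
    have := hc.three_le_length
    simp [← Walk.length_edges, hnil] at this
  have htail : c.support.tail ⊆ p.support.tail := by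
    intro w hw
    obtain ⟨e, he, hwe⟩ :=
      (Walk.mem_support_iff_exists_mem_edges_of_not_nil hc.not_nil).mp (List.mem_of_mem_tail hw)
    have hwp : w ∈ p.support :=
      (Walk.mem_support_iff_exists_mem_edges_of_not_nil hpos).mpr ⟨e, hcp he, hwe⟩
    obtain rfl | hw := p.mem_support_iff.mp hwp
    exacts [Walk.end_mem_tail_support hpos, hw]
  have hedges : c.edges.Perm p.edges :=
    (hc.edges_nodup.subperm hcp).perm_of_length_le (by simpa using hlen)
  have hsupport : c.support.tail.Perm p.support.tail :=
    (hc.support_nodup.subperm htail).perm_of_length_le (by simpa using hlen)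
  exact p.isCycle_def.mpr ⟨⟨hedges.nodup_iff.mp hc.edges_nodup⟩,
    fun hp => hpos (Walk.eq_nil_iff_nil.mp hp), hsupport.nodup_iff.mp hc.support_nodup⟩

lemma exists_isCycle_edges_subset_of_not_isAcyclic {p : G.Walk u v}
    (hp : ¬ p.toSubgraph.coe.IsAcyclic) :
    ∃ w, ∃ c : G.Walk w w, c.IsCycle ∧ c.edges ⊆ p.edges := by
  obtain ⟨x, q, hq⟩ : ∃ x, ∃ q : p.toSubgraph.coe.Walk x x, q.IsCycle := by
    simpa [IsAcyclic] using hp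
  refine ⟨_, q.map p.toSubgraph.hom, hq.map p.toSubgraph.hom_injective, fun e he => ?_⟩
  rw [Walk.edges_map, List.mem_map] at he
  obtain ⟨⟨a, b⟩, hab, rfl⟩ := he
  exact p.mem_edges_toSubgraph.mp (q.edges_subset_edgeSet hab)

lemma not_isAcyclic_coe_toSubgraph_of_isCycle {p : G.Walk v v} (hp : p.IsCycle) :
    ¬ p.toSubgraph.coe.IsAcyclic :=
  fun h => h p.mapToSubgraph (.of_map (f := p.toSubgraph.hom) (by rwa [p.map_mapToSubgraph_hom]))

lemma isCycle_iff_not_isAcyclic_coe_toSubgraph {p : G.Walk v v}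
    (hlen : (p.length : ℕ∞) ≤ G.egirth) : p.IsCycle ↔ ¬ p.toSubgraph.coe.IsAcyclic := by
  refine ⟨not_isAcyclic_coe_toSubgraph_of_isCycle, fun hp => ?_⟩
  obtain ⟨w, c, hc, hcp⟩ := exists_isCycle_edges_subset_of_not_isAcyclic hp
  exact isCycle_of_edges_subset hc hcp (by exact_mod_cast hlen.trans (egirth_le_length hc))

end ShortClosedWalks

section CountingRootedCycles

variable {V : Type*} {G : SimpleGraph V} [G.LocallyFinite]

lemma natCard_walk_length_eq_and [DecidableEq V] (u v : V) (l : ℕ) (P : G.Walk u v → Prop)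
    [DecidablePred P] :
    Nat.card {p : G.Walk u v // p.length = l ∧ P p} = #{p ∈ G.finsetWalkLength l u v | P p} := by
  rw [← Nat.card_eq_finsetCard]
  simp only [Finset.mem_filter, mem_finsetWalkLength_iff]

lemma closedWalkCount_eq_cycleFreeClosedWalkCount_add_rootedCycleCount (v : V) {l : ℕ}
    (hl : (l : ℕ∞) ≤ G.egirth) :
    G.closedWalkCount v l = G.cycleFreeClosedWalkCount v l + rootedCycleCount G v l := by
  classical
  have hcycle : ∀ p ∈ G.finsetWalkLength l v v, p.IsCycle ↔ ¬ p.toSubgraph.coe.IsAcyclic :=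
    fun p hp => isCycle_iff_not_isAcyclic_coe_toSubgraph
      (by rwa [mem_finsetWalkLength_iff.mp hp])
  have htotal : G.closedWalkCount v l = #(G.finsetWalkLength l v v) := by
    rw [closedWalkCount, ← Nat.card_eq_finsetCard]
    simp only [mem_finsetWalkLength_iff]
  rw [htotal, cycleFreeClosedWalkCount, rootedCycleCount, natCard_walk_length_eq_and,
    natCard_walk_length_eq_and, Finset.filter_congr hcycle, Finset.card_filter_add_card_filter_not]

lemma card_filter_mem_edges_of_isCycle [DecidableEq V] {v : V} {p : G.Walk v v}
    (hp : p.IsCycle) : #{u ∈ G.neighborFinset v | s(v, u) ∈ p.edges} = 2 := by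
  rw [← hp.ncard_neighborSet_toSubgraph_eq_two p.start_mem_support, ← Set.ncard_coe_finset]
  congr 1
  ext u
  simp only [Finset.coe_filter, mem_neighborFinset, Set.mem_ofPred_eq, Subgraph.mem_neighborSet,
    Walk.adj_toSubgraph_iff_mem_edges]
  exact and_iff_right_of_imp fun hu => p.adj_of_mem_edges hu

lemma two_mul_rootedCycleCount (v : V) (l : ℕ) :
    2 * rootedCycleCount G v l = ∑ u ∈ G.neighborFinset v,
      Nat.card {p : G.Walk v v // p.IsCycle ∧ p.length = l ∧ s(v, u) ∈ p.edges} := by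
  classical
  set F := {p ∈ G.finsetWalkLength l v v | p.IsCycle} with hF
  have hedges : ∀ p ∈ F,
      #((G.neighborFinset v).bipartiteAbove (fun p u => s(v, u) ∈ p.edges) p) = 2 :=
    fun p hp => card_filter_mem_edges_of_isCycle (Finset.mem_filter.mp hp).2
  have hcycles (u : V) :
      Nat.card {p : G.Walk v v // p.IsCycle ∧ p.length = l ∧ s(v, u) ∈ p.edges} =
        #(F.bipartiteBelow (fun p u => s(v, u) ∈ p.edges) u) := by
    simp only [and_left_comm (a := Walk.IsCycle _)]
    rw [natCard_walk_length_eq_and, Finset.bipartiteBelow, hF, Finset.filter_filter]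
  rw [rootedCycleCount, natCard_walk_length_eq_and, mul_comm, ← Finset.sum_const_nat hedges,
    Finset.sum_card_bipartiteAbove_eq_sum_card_bipartiteBelow]
  simp only [hcycles]

end CountingRootedCycles

section CountingWalks

variable {V : Type*} {G : SimpleGraph V} [Fintype V] [DecidableRel G.Adj] {k : ℕ}

lemma closedWalkCount_eq_adjMatrix_pow_apply [DecidableEq V] (v : V) (l : ℕ) :
    G.closedWalkCount v l = (G.adjMatrix ℕ ^ l) v v := by
  rw [adjMatrix_pow_apply_eq_card_walk, Nat.cast_id, ← Nat.card_eq_fintype_card]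
  rfl

lemma sum_adjMatrix_pow_apply [DecidableEq V] {α : Type*} [Semiring α]
    (hreg : G.IsRegularOfDegree k) (m : ℕ) (v : V) :
    ∑ w, (G.adjMatrix α ^ m) v w = (k : α) ^ m := by
  induction m generalizing v with
  | zero => simp [Matrix.one_apply]
  | succ m ih =>
    simp only [pow_succ', adjMatrix_mul_apply]
    rw [Finset.sum_comm, Finset.sum_congr rfl fun u _ => ih u]
    simp [hreg v]

lemma sum_sq_adjMatrix_pow_apply [DecidableEq V] (m : ℕ) (v : V) :
    ∑ w, (G.adjMatrix ℕ ^ m) v w ^ 2 = G.closedWalkCount v (m + m) := by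
  rw [closedWalkCount_eq_adjMatrix_pow_apply, pow_add, Matrix.mul_apply]
  refine Finset.sum_congr rfl fun w _ => ?_
  rw [sq, ((G.isSymm_adjMatrix (α := ℕ)).pow m).apply v w]

lemma pow_le_card_mul_closedWalkCount (hreg : G.IsRegularOfDegree k) {m : ℕ} {v : V}
    {s : Finset V} (hs : ∀ w, ∀ p : G.Walk v w, p.length = m → w ∈ s) :
    k ^ (m + m) ≤ #s * G.closedWalkCount v (m + m) := by
  classical
  have hsupp : ∀ w, (G.adjMatrix ℕ ^ m) v w ≠ 0 → w ∈ s := by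
    intro w hw
    rw [adjMatrix_pow_apply_eq_card_walk, Nat.cast_id, ← pos_iff_ne_zero,
      Fintype.card_pos_iff] at hw
    obtain ⟨p, hp⟩ := hw
    exact hs w p hp
  calc k ^ (m + m)
      = (∑ w ∈ s, (G.adjMatrix ℕ ^ m) v w) ^ 2 := by
        rw [Finset.sum_subset s.subset_univ fun w _ => not_imp_comm.mp (hsupp w),
          sum_adjMatrix_pow_apply hreg, Nat.cast_id, ← pow_mul, mul_two]
    _ ≤ #s * ∑ w ∈ s, (G.adjMatrix ℕ ^ m) v w ^ 2 := sq_sum_le_card_mul_sum_sq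
    _ ≤ #s * ∑ w, (G.adjMatrix ℕ ^ m) v w ^ 2 := by
        gcongr
        exact s.subset_univ
    _ = #s * G.closedWalkCount v (m + m) := by rw [sum_sq_adjMatrix_pow_apply]

end CountingWalks

section Bipartite

variable {V : Type*} {G : SimpleGraph V}

lemma exists_forall_walk_color_eq (C : G.Coloring Bool) (v : V) (m : ℕ) :
    ∃ b, ∀ w, ∀ p : G.Walk v w, p.length = m → C w = b := by
  obtain hm | hm := m.even_or_odd
  · refine ⟨C v, fun w p hp => ?_⟩
    have := (C.even_length_iff_congr p).mp (hp ▸ hm)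
    exact (Bool.eq_iff_iff.mpr this).symm
  · refine ⟨!C v, fun w p hp => ?_⟩
    have := (C.odd_length_iff_not_congr p).mp (hp ▸ hm)
    rw [Bool.eq_iff_iff, Bool.not_eq_true', ← Bool.not_eq_true]
    exact this.symm

lemma isBipartiteWith_colorClass_compl (C : G.Coloring Bool) (b : Bool) :
    G.IsBipartiteWith {v | C v = b} {v | C v = b}ᶜ where
  disjoint := disjoint_compl_right
  mem_of_adj v w hvw := by
    have := C.valid hvw
    simp only [Set.mem_ofPred_eq, Set.mem_compl_iff]
    cases b <;> grind

variable [Fintype V] {k : ℕ}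

lemma two_mul_card_colorClass [G.LocallyFinite] (hreg : G.IsRegularOfDegree k) (hk : k ≠ 0)
    (C : G.Coloring Bool) (b : Bool) : 2 * #{w | C w = b} = Fintype.card V := by
  have hdegrees := isBipartiteWith_sum_degrees_eq (G := G)
    (s := ({w | C w = b} : Finset V)) (t := ({w | ¬ C w = b} : Finset V))
    (by simpa [Set.compl_ofPred] using isBipartiteWith_colorClass_compl C b)
  simp only [hreg.degree_eq, Finset.sum_const, smul_eq_mul] at hdegrees
  have hcard := Nat.eq_of_mul_eq_mul_right (Nat.pos_of_ne_zero hk) hdegrees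
  rw [← Finset.card_univ, ← Finset.card_filter_add_card_filter_not (s := .univ) (C · = b),
    ← hcard, two_mul]

theorem two_mul_pow_le_card_mul_closedWalkCount [G.LocallyFinite] (hbip : G.Colorable 2)
    (hreg : G.IsRegularOfDegree k) (hk : k ≠ 0) {l : ℕ} (hl : Even l) (v : V) :
    2 * k ^ l ≤ Fintype.card V * G.closedWalkCount v l := by
  classical
  obtain ⟨m, rfl⟩ := hl
  let C : G.Coloring Bool := hbip.toColoring (by simp)
  obtain ⟨b, hb⟩ := exists_forall_walk_color_eq C v m
  rw [← two_mul_card_colorClass hreg hk C b, mul_assoc]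
  gcongr
  exact pow_le_card_mul_closedWalkCount (by convert hreg) (by simpa using hb)

end Bipartite

section EdgeGirthRegular

variable {V : Type*} {G : SimpleGraph V} {n k g lam : ℕ}

lemma exists_isCycle_length_eq_of_isEGR (h : G.IsEGR n k g lam) :
    ∃ v, ∃ c : G.Walk v v, c.IsCycle ∧ c.length = g := by
  obtain ⟨-, -, -, hgirth, -⟩ := h
  have hG : ¬ G.IsAcyclic := by simp [← egirth_eq_top, hgirth]
  obtain ⟨v, c, hc, hlen⟩ := exists_egirth_eq_length.mpr hG
  exact ⟨v, c, hc, by exact_mod_cast (hgirth ▸ hlen).symm⟩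

lemma even_girth_of_isEGR (hbip : G.Colorable 2) (h : G.IsEGR n k g lam) : Even g := by
  obtain ⟨v, c, -, rfl⟩ := exists_isCycle_length_eq_of_isEGR h
  exact two_colorable_iff_forall_loop_even.mp hbip v c

lemma isRegularOfDegree_of_isEGR [G.LocallyFinite] (h : G.IsEGR n k g lam) :
    G.IsRegularOfDegree k := by
  intro v
  have hdegree : (G.neighborSet v).ncard = k := h.2.2.1 v
  rw [← hdegree, Set.ncard_eq_toFinset_card', ← card_neighborFinset_eq_degree, neighborFinset]

lemma degree_ne_zero_of_isEGR (h : G.IsEGR n k g lam) : k ≠ 0 := by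
  have : Finite V := h.1
  obtain ⟨v, c, hc, -⟩ := exists_isCycle_length_eq_of_isEGR h
  have hdegree : (G.neighborSet v).ncard = k := h.2.2.1 v
  rw [← hdegree]
  exact Set.ncard_ne_zero_of_mem (c.adj_snd hc.not_nil)

lemma rootedCycleCount_eq_of_isEGR (h : G.IsEGR n k g lam) (v : V) :
    rootedCycleCount G v g = k * lam := by
  classical
  have : Finite V := h.1
  have : Fintype V := .ofFinite V
  have hreg : G.IsRegularOfDegree k := isRegularOfDegree_of_isEGR h
  obtain ⟨-, -, -, -, hlam⟩ := h
  have hsum := two_mul_rootedCycleCount (G := G) v g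
  rw [Finset.sum_const_nat fun u hu => hlam v u (by simpa using hu),
    card_neighborFinset_eq_degree, hreg.degree_eq] at hsum
  linarith

lemma closedWalkCount_eq_of_isEGR (h : G.IsEGR n k g lam) (v : V) :
    G.closedWalkCount v g = G.cycleFreeClosedWalkCount v g + k * lam := by
  classical
  have : Finite V := h.1
  have : Fintype V := .ofFinite V
  have hgirth : G.egirth = g := h.2.2.2.1
  rw [← rootedCycleCount_eq_of_isEGR h v,
    closedWalkCount_eq_cycleFreeClosedWalkCount_add_rootedCycleCount v hgirth.ge]

theorem bipartite_egr_even_girth_2mod4_lower_bound_general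
    (hbip : G.Colorable 2) (h : G.IsEGR n k g lam) (v : V) :
    n * (G.cycleFreeClosedWalkCount v g + k * lam) ≥ 2 * k ^ g := by
  classical
  have : Finite V := h.1
  have : Fintype V := .ofFinite V
  have hcard : Nat.card V = n := h.2.1
  rw [← closedWalkCount_eq_of_isEGR h v, ← hcard, Nat.card_eq_fintype_card]
  exact two_mul_pow_le_card_mul_closedWalkCount hbip (isRegularOfDegree_of_isEGR h)
    (degree_ne_zero_of_isEGR h) (even_girth_of_isEGR hbip h) v

end EdgeGirthRegular

/-- Let `k ≥ 3` and let `G` be a bipartite `egr(n, k, g, λ)` graph with `g ≡ 2 (mod 4)`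
(in particular `g` is even). If every vertex of `G` lies on exactly `c` cycle-free
closed walks of length `g`, then `n(c + kλ) ≥ 2k^g`. -/
theorem bipartite_egr_even_girth_2mod4_lower_bound (n k g lam c : ℕ) (hk : 3 ≤ k)
    (hg : g % 4 = 2) {V : Type*} (G : SimpleGraph V) (hbip : G.Colorable 2)
    (h : G.IsEGR n k g lam)
    (hc : ∀ v : V, G.cycleFreeClosedWalkCount v g = c) :
    n * (c + k * lam) ≥ 2 * k ^ g := by
  obtain ⟨v, -⟩ := exists_isCycle_length_eq_of_isEGR h
  exact hc v ▸ bipartite_egr_even_girth_2mod4_lower_bound_general hbip h v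
end

section
/- Let k ≥ 3 and let G be an egr(n,k,g,λ) graph with g = 2h+1 odd, and let v be a vertex of G. Then the number of edges of G both of whose endpoints are at distance exactly h from v equals kλ/2, and the number of edges of G with one endpoint at distance exactly h from v and the other at distance exactly h+1 from v equals k·((k−1)^h − λ). -/
/-!
In a graph of girth at least `2h + 1`, two distinct paths with common ends have total length at
least `2h + 1`, and if they attain it, they close up to a girth cycle. Hence the ball of radius `h`
about `v` is a tree, up to edges joining two vertices of the sphere `S` of radius `h`. A girth cycle
through `v`, with an orientation, is determined by the ordered pair of ends of its edge opposite
to `v`, and every ordered pair of adjacent vertices in `S` arises in this way. There are `kλ`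
oriented girth cycles through `v`: each uses two of the `k` edges at `v`, and each of these edges
lies on `2λ` of them. Finally, `S` has `k (k - 1) ^ (h - 1)` vertices, each with exactly one
neighbour closer to `v`. Of the remaining `k (k - 1) ^ h` edge ends at `S`, those inside `S` account
for `kλ`, and the others lead to the sphere of radius `h + 1`.
-/

open SimpleGraph

namespace EGR

variable {V : Type*} {G : SimpleGraph V} {g h i k : ℕ} {u v x y : V}

/-! ### Short paths -/

theorem exists_eq_copy_of_isSubwalk {p : G.Walk u v} {q : G.Walk x y} (hpq : p.IsSubwalk q)
    (hlen : q.length ≤ p.length) : ∃ (hx : x = u) (hy : y = v), p = q.copy hx hy := by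
  obtain ⟨a, b, rfl⟩ := hpq
  simp only [Walk.length_append] at hlen
  obtain rfl := Walk.eq_of_length_eq_zero (p := a) (by omega)
  obtain rfl := Walk.eq_of_length_eq_zero (p := b) (by omega)
  obtain rfl : a = .nil := Walk.eq_nil_iff_nil.2 (Walk.length_eq_zero_iff.1 (by omega))
  obtain rfl : b = .nil := Walk.eq_nil_iff_nil.2 (Walk.length_eq_zero_iff.1 (by omega))
  exact ⟨rfl, rfl, by simp⟩

theorem isCycle_append_reverse_of_ne (hg : g ≤ G.egirth) {p q : G.Walk u v} (hp : p.IsPath)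
    (hq : q.IsPath) (hne : p ≠ q) (hlen : p.length + q.length ≤ g) :
    (p.append q.reverse).IsCycle := by
  obtain ⟨_, _, p', q', hp', hq', hc⟩ := hp.exists_isCycle_of_ne hq hne
  have hgc : g ≤ p'.length + q'.length := by
    simpa only [Nat.cast_le, Walk.length_append, Walk.length_reverse] using
      hg.trans (egirth_le_length hc)
  have hpl : p'.length ≤ p.length := Walk.length_le_of_isSubwalk hp'
  have hql : q'.length ≤ q.length := Walk.length_le_of_isSubwalk hq'
  obtain ⟨rfl, rfl, rfl⟩ := exists_eq_copy_of_isSubwalk hp' (by omega)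
  obtain ⟨_, _, rfl⟩ := exists_eq_copy_of_isSubwalk hq' (by omega)
  exact hc

theorem eq_of_isPath_of_length_add_lt (hg : g ≤ G.egirth) {p q : G.Walk u v} (hp : p.IsPath)
    (hq : q.IsPath) (hlen : p.length + q.length < g) : p = q := by
  by_contra hne
  have hgc := hg.trans (egirth_le_length (isCycle_append_reverse_of_ne hg hp hq hne hlen.le))
  simp only [Nat.cast_le, Walk.length_append, Walk.length_reverse] at hgc
  omega

theorem dist_eq_length_of_isPath (hg : g ≤ G.egirth) {p : G.Walk u v} (hp : p.IsPath)
    (hlen : 2 * p.length < g) : G.dist u v = p.length := by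
  obtain ⟨q, hq, hql⟩ := p.reachable.exists_path_of_dist
  have := G.dist_le p
  rw [eq_of_isPath_of_length_add_lt hg hp hq (by omega), hql]

theorem isPath_concat_of_length_le_dist {p : G.Walk u x} (hp : p.IsPath) (hxy : G.Adj x y)
    (hlen : p.length ≤ G.dist u y) : (p.concat hxy).IsPath := by
  classical
  refine hp.concat (fun hy => ?_) hxy
  have h1 := G.dist_le (p.takeUntil y hy)
  have h2 := Walk.length_takeUntil_lt_length hy hxy.ne'
  omega

/-! ### Spheres -/

/-- The sphere of radius `i` about `v`. As `SimpleGraph.dist` is `0` between vertices in different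
components, the sphere of radius `0` also contains every vertex not reachable from `v`. -/
def sphere (G : SimpleGraph V) (v : V) (i : ℕ) : Set V := {x | G.dist v x = i}

theorem exists_isPath_of_mem_sphere (hx : x ∈ sphere G v i) (hi : i ≠ 0) :
    ∃ p : G.Walk v x, p.IsPath ∧ p.length = i := by
  obtain rfl : G.dist v x = i := hx
  exact (Reachable.of_dist_ne_zero hi).exists_path_of_dist

theorem exists_adj_mem_sphere (hy : y ∈ sphere G v (i + 1)) : ∃ x ∈ sphere G v i, G.Adj x y := by
  obtain ⟨p, -, hpl⟩ := exists_isPath_of_mem_sphere hy i.succ_ne_zero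
  have hadj : G.Adj p.penultimate y := p.adj_penultimate (by rw [← Walk.length_eq_zero_iff]; omega)
  have hle := G.dist_le p.dropLast
  have hdiff := hadj.diff_dist_adj (u := v)
  simp only [sphere, Set.mem_ofPred_eq, Walk.length_dropLast] at hy hle hdiff ⊢
  exact ⟨p.penultimate, by omega, hadj⟩

theorem existsUnique_adj_mem_sphere (hg : g ≤ G.egirth) (hi : 2 * (i + 1) < g)
    (hy : y ∈ sphere G v (i + 1)) : ∃! x, x ∈ sphere G v i ∧ G.Adj x y := by
  obtain ⟨r, -⟩ := exists_isPath_of_mem_sphere hy i.succ_ne_zero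
  have exists_geodesic_concat {x : V} (hx : x ∈ sphere G v i) (hxy : G.Adj x y) :
      ∃ p : G.Walk v x, (p.concat hxy).IsPath ∧ p.length = i := by
    obtain ⟨p, hp, hpl⟩ := (r.reachable.trans hxy.symm.reachable).exists_path_of_dist
    rw [hx] at hpl
    exact ⟨p, isPath_concat_of_length_le_dist hp hxy (by rw [hy]; omega), hpl⟩
  refine existsUnique_of_exists_of_unique (exists_adj_mem_sphere hy) ?_
  rintro x₁ x₂ ⟨hx₁, hadj₁⟩ ⟨hx₂, hadj₂⟩
  obtain ⟨p₁, hp₁, hl₁⟩ := exists_geodesic_concat hx₁ hadj₁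
  obtain ⟨p₂, hp₂, hl₂⟩ := exists_geodesic_concat hx₂ hadj₂
  have := eq_of_isPath_of_length_add_lt hg hp₁ hp₂ (by simp only [Walk.length_concat]; omega)
  simpa only [Walk.penultimate_concat] using congrArg Walk.penultimate this

theorem not_adj_of_mem_sphere (hg : g ≤ G.egirth) (hi : i ≠ 0) (hig : 2 * i + 1 < g)
    (hx : x ∈ sphere G v i) (hy : y ∈ sphere G v i) : ¬ G.Adj x y := by
  intro hxy
  obtain ⟨p, hp, hpl⟩ := exists_isPath_of_mem_sphere hx hi
  obtain ⟨q, hq, hql⟩ := exists_isPath_of_mem_sphere hy hi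
  have hp' := isPath_concat_of_length_le_dist hp hxy (by rw [hy, hpl])
  have hpq : p.concat hxy = q :=
    eq_of_isPath_of_length_add_lt hg hp' hq (by simp only [Walk.length_concat]; omega)
  have := congrArg Walk.length hpq
  simp only [Walk.length_concat] at this
  omega

theorem finite_sphere [G.LocallyFinite] (hi : i ≠ 0) : (sphere G v i).Finite := by
  induction i, Nat.one_le_iff_ne_zero.2 hi using Nat.le_induction with
  | base =>
    exact (G.neighborSet v).toFinite.subset fun _ => dist_eq_one_iff_adj.1
  | succ i hi ih =>
    refine ((ih (by omega)).biUnion fun x _ => (G.neighborSet x).toFinite).subset fun y hy => ?_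
    obtain ⟨x, hx, hxy⟩ := exists_adj_mem_sphere hy
    exact Set.mem_biUnion hx hxy

/-! ### Ordered pairs of adjacent vertices -/

/-- The ordered pairs of adjacent vertices leading from `s` to `t`. This is the version of
`SimpleGraph.interedges` for sets. -/
def adjPairs (G : SimpleGraph V) (s t : Set V) : Set (V × V) :=
  {e | G.Adj e.1 e.2 ∧ e.1 ∈ s ∧ e.2 ∈ t}

section adjPairs

variable {s t t₁ t₂ : Set V}

theorem finite_adjPairs [G.LocallyFinite] (hs : s.Finite) : (adjPairs G s t).Finite := by
  refine (hs.biUnion fun x _ => (G.neighborSet x).toFinite.image (Prod.mk x)).subset ?_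
  rintro ⟨x, y⟩ ⟨hxy, hx, -⟩
  exact Set.mem_biUnion hx ⟨y, hxy, rfl⟩

theorem adjPairs_union_right :
    adjPairs G s (t₁ ∪ t₂) = adjPairs G s t₁ ∪ adjPairs G s t₂ := by
  ext; simp only [adjPairs, Set.mem_ofPred_eq, Set.mem_union]; tauto

theorem disjoint_adjPairs_right (ht : Disjoint t₁ t₂) :
    Disjoint (adjPairs G s t₁) (adjPairs G s t₂) :=
  Set.disjoint_left.2 fun _ h₁ h₂ => Set.disjoint_left.1 ht h₁.2.2 h₂.2.2

theorem ncard_adjPairs_comm : (adjPairs G s t).ncard = (adjPairs G t s).ncard :=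
  Set.ncard_congr (fun e _ => e.swap) (fun _ he => ⟨he.1.symm, he.2.2, he.2.1⟩)
    (fun _ _ _ _ he => Prod.swap_injective he)
    fun e he => ⟨e.swap, ⟨he.1.symm, he.2.2, he.2.1⟩, e.swap_swap⟩

theorem ncard_adjPairs_of_existsUnique (ht : ∀ y ∈ t, ∃! x, x ∈ s ∧ G.Adj x y) :
    (adjPairs G s t).ncard = t.ncard := by
  refine Set.ncard_congr (fun e _ => e.2) (fun _ he => he.2.2) ?_ fun y hy => ?_
  · rintro ⟨x₁, y⟩ ⟨x₂, _⟩ ⟨hadj₁, hx₁, hy⟩ ⟨hadj₂, hx₂, -⟩ rfl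
    exact Prod.ext ((ht y hy).unique ⟨hx₁, hadj₁⟩ ⟨hx₂, hadj₂⟩) rfl
  · obtain ⟨x, hx, hxy⟩ := (ht y hy).exists
    exact ⟨(x, y), ⟨hxy, hx, hy⟩, rfl⟩

theorem ncard_adjPairs_univ [G.LocallyFinite] (hreg : G.IsRegularOfDegree k) (hs : s.Finite) :
    (adjPairs G s Set.univ).ncard = s.ncard * k := by
  have e : adjPairs G s Set.univ ≃ Σ x : s, G.neighborSet x :=
    { toFun e := ⟨⟨e.1.1, e.2.2.1⟩, e.1.2, e.2.1⟩
      invFun a := ⟨(a.1.1, a.2.1), a.2.2, a.1.2, trivial⟩ }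
  have := hs.fintype
  have hdegree (x : V) : Nat.card (G.neighborSet x) = k := by
    rw [Nat.card_eq_fintype_card, card_neighborSet_eq_degree, hreg.degree_eq]
  rw [← Nat.card_coe_set_eq, Nat.card_congr e, Nat.card_sigma]
  simp only [hdegree, Finset.sum_const, Finset.card_univ, smul_eq_mul, Set.fintypeCard_eq_ncard]

theorem setOf_edges_within_eq_image :
    {e | e ∈ G.edgeSet ∧ ∀ x ∈ e, x ∈ s} = Sym2.map Subtype.val '' (G.induce s).edgeSet := by
  refine Set.Subset.antisymm ?_ ?_
  · rintro e ⟨he, hes⟩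
    induction e with | h x y =>
    exact ⟨s(⟨x, hes x (Sym2.mem_mk_left x y)⟩, ⟨y, hes y (Sym2.mem_mk_right x y)⟩), he, rfl⟩
  · rintro _ ⟨e, he, rfl⟩
    induction e with | h x y =>
    exact ⟨he, by simp⟩

theorem two_mul_card_edges_within (hs : s.Finite) :
    2 * Nat.card {e : Sym2 V // e ∈ G.edgeSet ∧ ∀ x ∈ e, x ∈ s} = (adjPairs G s s).ncard := by
  classical
  have := hs.fintype
  have hedge : Nat.card {e : Sym2 V // e ∈ G.edgeSet ∧ ∀ x ∈ e, x ∈ s} =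
      Nat.card (G.induce s).edgeSet :=
    (congrArg Set.ncard setOf_edges_within_eq_image).trans
      (Set.ncard_image_of_injective _ (Sym2.map.injective Subtype.val_injective))
  have hpair : Nat.card {e : s × s // (G.induce s).Adj e.1 e.2} = (adjPairs G s s).ncard :=
    Nat.card_congr
      { toFun e := ⟨(e.1.1.1, e.1.2.1), e.2, e.1.1.2, e.1.2.2⟩
        invFun e := ⟨(⟨e.1.1, e.2.2.1⟩, ⟨e.1.2, e.2.2.2⟩), e.2.1⟩ }
  rw [hedge, ← hpair, Nat.card_eq_fintype_card, Nat.card_eq_fintype_card, ← edgeFinset_card,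
    two_mul_card_edgeFinset, Fintype.card_subtype]

theorem card_edges_between (hst : Disjoint s t) :
    Nat.card {e : Sym2 V // e ∈ G.edgeSet ∧ ∃ x y : V, e = s(x, y) ∧ x ∈ s ∧ y ∈ t} =
      (adjPairs G s t).ncard := by
  refine (Set.ncard_congr (fun e _ => s(e.1, e.2)) ?_ ?_ ?_).symm
  · rintro ⟨x, y⟩ ⟨hxy, hx, hy⟩
    exact ⟨hxy, x, y, rfl, hx, hy⟩
  · rintro ⟨x, y⟩ ⟨x', y'⟩ ⟨-, hx, hy⟩ ⟨-, hx', hy'⟩ he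
    rcases Sym2.eq_iff.1 he with ⟨rfl, rfl⟩ | ⟨rfl, rfl⟩
    · rfl
    · exact (Set.disjoint_left.1 hst hx hy').elim
  · rintro _ ⟨he, x, y, rfl, hx, hy⟩
    exact ⟨(x, y), ⟨he, hx, hy⟩, rfl⟩

end adjPairs

theorem disjoint_sphere {j : ℕ} (hij : i ≠ j) : Disjoint (sphere G v i) (sphere G v j) :=
  Set.disjoint_left.2 fun _ hi hj => hij (hi.symm.trans hj)

theorem adjPairs_sphere_univ :
    adjPairs G (sphere G v (i + 1)) Set.univ =
      adjPairs G (sphere G v (i + 1))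
        (sphere G v i ∪ (sphere G v (i + 1) ∪ sphere G v (i + 2))) := by
  refine Set.Subset.antisymm ?_ fun e he => ⟨he.1, he.2.1, trivial⟩
  rintro ⟨x, y⟩ ⟨hxy, hx, -⟩
  have hdiff := hxy.diff_dist_adj (u := v)
  simp only [adjPairs, sphere, Set.mem_ofPred_eq, Set.mem_union] at hx hdiff ⊢
  exact ⟨hxy, hx, by omega⟩

theorem ncard_sphere_mul [G.LocallyFinite] (hreg : G.IsRegularOfDegree k) (hg : g ≤ G.egirth)
    (hi : 2 * (i + 1) < g) :
    (sphere G v (i + 1)).ncard * k = (sphere G v (i + 1)).ncard +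
      ((adjPairs G (sphere G v (i + 1)) (sphere G v (i + 1))).ncard +
        (adjPairs G (sphere G v (i + 1)) (sphere G v (i + 2))).ncard) := by
  have hfin : (sphere G v (i + 1)).Finite := finite_sphere i.succ_ne_zero
  have hdisj : Disjoint (sphere G v i) (sphere G v (i + 1) ∪ sphere G v (i + 2)) :=
    Set.disjoint_union_right.2 ⟨disjoint_sphere (by omega), disjoint_sphere (by omega)⟩
  rw [← ncard_adjPairs_univ hreg hfin, adjPairs_sphere_univ, adjPairs_union_right,
    Set.ncard_union_eq (disjoint_adjPairs_right hdisj) (finite_adjPairs hfin)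
      (finite_adjPairs hfin),
    adjPairs_union_right, Set.ncard_union_eq (disjoint_adjPairs_right (disjoint_sphere (by omega)))
      (finite_adjPairs hfin) (finite_adjPairs hfin), ncard_adjPairs_comm,
    ncard_adjPairs_of_existsUnique fun y hy => existsUnique_adj_mem_sphere hg hi hy]

theorem ncard_sphere [G.LocallyFinite] (hreg : G.IsRegularOfDegree k) (hg : g ≤ G.egirth)
    (hi : 2 * (i + 1) < g) : ((sphere G v (i + 1)).ncard : ℤ) = k * ((k : ℤ) - 1) ^ i := by
  induction i with
  | zero =>
    have hsphere : sphere G v 1 = G.neighborSet v := Set.ext fun _ => dist_eq_one_iff_adj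
    rw [zero_add, hsphere, ← Set.fintypeCard_eq_ncard, card_neighborSet_eq_degree, hreg.degree_eq,
      pow_zero, mul_one]
  | succ i ih =>
    have hinner : adjPairs G (sphere G v (i + 1)) (sphere G v (i + 1)) = ∅ :=
      Set.eq_empty_of_forall_notMem fun e he =>
        not_adj_of_mem_sphere hg i.succ_ne_zero (by omega) he.2.1 he.2.2 he.1
    have hbalance := ncard_sphere_mul (v := v) hreg hg (i := i) (by omega)
    rw [hinner, Set.ncard_empty, zero_add,
      ncard_adjPairs_of_existsUnique fun y hy => existsUnique_adj_mem_sphere hg hi hy] at hbalance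
    zify at hbalance
    rw [ih (by omega)] at hbalance
    linear_combination -hbalance

/-! ### Girth cycles -/

/-- The closed walk that follows `p`, crosses the edge `xy` and returns along `q`. It splits a girth
cycle at the edge opposite to its base point. -/
def loopThrough (p : G.Walk v x) (hxy : G.Adj x y) (q : G.Walk v y) : G.Walk v v :=
  (p.concat hxy).append q.reverse

section loopThrough

variable {p : G.Walk v x} {hxy : G.Adj x y} {q : G.Walk v y}

theorem length_loopThrough : (loopThrough p hxy q).length = p.length + q.length + 1 := by
  simp only [loopThrough, Walk.length_append, Walk.length_concat, Walk.length_reverse]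
  omega

theorem getVert_loopThrough (hp : p.length = h) : (loopThrough p hxy q).getVert h = x := by
  subst hp
  simp [loopThrough, Walk.concat_append, Walk.getVert_append]

theorem getVert_succ_loopThrough (hp : p.length = h) :
    (loopThrough p hxy q).getVert (h + 1) = y := by
  subst hp
  simp [loopThrough, Walk.concat_append, Walk.getVert_append]

theorem isCycle_loopThrough (hg : g ≤ G.egirth) (hp : p.IsPath) (hq : q.IsPath)
    (hpq : p.length = q.length) (hlen : 2 * p.length + 1 ≤ g) : (loopThrough p hxy q).IsCycle := by
  have hdist := dist_eq_length_of_isPath hg hq (by omega)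
  have hp' := isPath_concat_of_length_le_dist hp hxy (by omega)
  refine isCycle_append_reverse_of_ne hg hp' hq (fun heq => ?_)
    (by simp only [Walk.length_concat]; omega)
  have := congrArg Walk.length heq
  simp only [Walk.length_concat] at this
  omega

end loopThrough

theorem drop_eq_cons_drop_succ {c : G.Walk x y} (hi : i < c.length) :
    c.drop i = .cons (c.adj_getVert_succ hi) (c.drop (i + 1)) := by
  induction i generalizing x with
  | zero => cases c with
    | nil => simp only [Walk.length_nil, lt_self_iff_false] at hi
    | cons _ c => cases c <;> rfl
  | succ i ih => cases c with
    | nil => simp only [Walk.length_nil, not_lt_zero] at hi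
    | cons _ c => exact ih (c := c) (by simpa using hi)

theorem exists_eq_loopThrough {c : G.Walk v v} (hc : c.IsCycle) (hlen : c.length = 2 * h + 1) :
    ∃ (x y : V) (p : G.Walk v x) (hxy : G.Adj x y) (q : G.Walk v y), c = loopThrough p hxy q ∧
      p.IsPath ∧ p.length = h ∧ q.IsPath ∧ q.length = h := by
  have := hc.three_le_length
  have hxy : G.Adj (c.getVert h) (c.getVert (h + 1)) := c.adj_getVert_succ (by omega)
  refine ⟨_, _, c.take h, hxy, (c.drop (h + 1)).reverse, ?_, hc.isPath_take (by omega), ?_,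
    (hc.isPath_drop (by omega)).reverse, ?_⟩
  · rw [loopThrough, Walk.concat_append, Walk.reverse_reverse, ← drop_eq_cons_drop_succ (by omega),
      Walk.append_take_drop_eq]
  · rw [Walk.take_length]; omega
  · rw [Walk.length_reverse, Walk.drop_length]; omega

theorem bijOn_isCycle_adjPairs (hg : (2 * h + 1 : ℕ) ≤ G.egirth) (hh : h ≠ 0) :
    Set.BijOn (fun c : G.Walk v v => (c.getVert h, c.getVert (h + 1)))
      {c | c.IsCycle ∧ c.length = 2 * h + 1} (adjPairs G (sphere G v h) (sphere G v h)) := by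
  refine ⟨?_, ?_, ?_⟩
  · rintro c ⟨hc, hlen⟩
    obtain ⟨x, y, p, hxy, q, rfl, hp, hpl, hq, hql⟩ := exists_eq_loopThrough hc hlen
    simp only [getVert_loopThrough hpl, getVert_succ_loopThrough hpl]
    exact ⟨hxy, (dist_eq_length_of_isPath hg hp (by omega)).trans hpl,
      (dist_eq_length_of_isPath hg hq (by omega)).trans hql⟩
  · rintro c ⟨hc, hlen⟩ c' ⟨hc', hlen'⟩ heq
    obtain ⟨x, y, p, hxy, q, rfl, hp, hpl, hq, hql⟩ := exists_eq_loopThrough hc hlen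
    obtain ⟨x', y', p', hxy', q', rfl, hp', hpl', hq', hql'⟩ := exists_eq_loopThrough hc' hlen'
    simp only [getVert_loopThrough hpl, getVert_succ_loopThrough hpl, getVert_loopThrough hpl',
      getVert_succ_loopThrough hpl', Prod.mk.injEq] at heq
    obtain ⟨rfl, rfl⟩ := heq
    rw [eq_of_isPath_of_length_add_lt hg hp hp' (by omega),
      eq_of_isPath_of_length_add_lt hg hq hq' (by omega)]
  · rintro ⟨x, y⟩ ⟨hxy, hx, hy⟩
    obtain ⟨p, hp, hpl⟩ := exists_isPath_of_mem_sphere hx hh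
    obtain ⟨q, hq, hql⟩ := exists_isPath_of_mem_sphere hy hh
    refine ⟨loopThrough p hxy q, ⟨isCycle_loopThrough hg hp hq (by omega) (by omega), ?_⟩, ?_⟩
    · rw [length_loopThrough]; omega
    · simp only [getVert_loopThrough hpl, getVert_succ_loopThrough hpl]

theorem card_filter_mem_edges_eq_two [G.LocallyFinite] [DecidableEq V] {c : G.Walk v v}
    (hc : c.IsCycle) : (G.neighborFinset v |>.filter fun u => s(v, u) ∈ c.edges).card = 2 := by
  rw [← hc.ncard_neighborSet_toSubgraph_eq_two c.start_mem_support, ← Set.ncard_coe_finset]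
  congr 1
  ext u
  simp only [Finset.coe_filter, mem_neighborFinset, Set.mem_ofPred_eq, Subgraph.mem_neighborSet,
    Walk.adj_toSubgraph_iff_mem_edges, and_iff_right_iff_imp]
  exact c.adj_of_mem_edges

theorem two_mul_ncard_isCycle [G.LocallyFinite] :
    2 * {c : G.Walk v v | c.IsCycle ∧ c.length = g}.ncard = ∑ u ∈ G.neighborFinset v,
      Nat.card {c : G.Walk v v // c.IsCycle ∧ c.length = g ∧ s(v, u) ∈ c.edges} := by
  classical
  obtain ⟨C, hC⟩ : ∃ C : Finset (G.Walk v v), ∀ c, c ∈ C ↔ c.IsCycle ∧ c.length = g :=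
    ⟨(G.finsetWalkLength g v v).filter Walk.IsCycle, fun c => by
      rw [Finset.mem_filter, mem_finsetWalkLength_iff, and_comm]⟩
  have hcycles : {c : G.Walk v v | c.IsCycle ∧ c.length = g}.ncard = C.card :=
    Nat.subtype_card C hC
  have hedge (u : V) : Nat.card {c : G.Walk v v // c.IsCycle ∧ c.length = g ∧ s(v, u) ∈ c.edges} =
      (C.filter fun c => s(v, u) ∈ c.edges).card :=
    Nat.subtype_card _ fun c => by
      rw [Finset.mem_filter, hC, and_assoc]
  simp only [hcycles, hedge]
  calc 2 * C.card
      = ∑ c ∈ C, (G.neighborFinset v |>.filter fun u => s(v, u) ∈ c.edges).card := by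
        rw [Finset.sum_congr rfl fun c hc => card_filter_mem_edges_eq_two ((hC c).1 hc).1,
          Finset.sum_const, smul_eq_mul, mul_comm]
    _ = ∑ u ∈ G.neighborFinset v, (C.filter fun c => s(v, u) ∈ c.edges).card := by
        simp only [Finset.card_filter]
        exact Finset.sum_comm

end EGR

theorem egr_odd_girth_edge_counts_general {V : Type*} (G : SimpleGraph V) [G.LocallyFinite]
    {k lam h : ℕ} (hreg : G.IsRegularOfDegree k) (hh : h ≠ 0)
    (hgirth : (2 * h + 1 : ℕ) ≤ G.egirth) (v : V)
    (hlam : ∀ u, G.Adj v u →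
      Nat.card {p : G.Walk v v // p.IsCycle ∧ p.length = 2 * h + 1 ∧ s(v, u) ∈ p.edges} =
        2 * lam) :
    2 * Nat.card {e : Sym2 V // e ∈ G.edgeSet ∧ ∀ x ∈ e, G.dist v x = h} = k * lam ∧
    (Nat.card {e : Sym2 V // e ∈ G.edgeSet ∧
        ∃ x y : V, e = s(x, y) ∧ G.dist v x = h ∧ G.dist v y = h + 1} : ℤ)
      = k * (((k : ℤ) - 1) ^ h - lam) := by
  have hcycles := EGR.two_mul_ncard_isCycle (G := G) (v := v) (g := 2 * h + 1)
  rw [Finset.sum_congr rfl fun u hu => hlam u ((G.mem_neighborFinset v u).1 hu), Finset.sum_const,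
    card_neighborFinset_eq_degree, hreg.degree_eq, smul_eq_mul, mul_left_comm,
    Nat.mul_right_inj two_ne_zero, (EGR.bijOn_isCycle_adjPairs hgirth hh).ncard_eq] at hcycles
  refine ⟨(EGR.two_mul_card_edges_within (EGR.finite_sphere hh)).trans hcycles, ?_⟩
  obtain ⟨i, rfl⟩ := Nat.exists_eq_add_one_of_ne_zero hh
  have hbalance := EGR.ncard_sphere_mul (v := v) hreg hgirth (i := i) (by omega)
  rw [hcycles] at hbalance
  zify at hbalance
  rw [EGR.ncard_sphere hreg hgirth (by omega)] at hbalance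
  refine (congrArg Nat.cast (EGR.card_edges_between (EGR.disjoint_sphere (by omega)))).trans ?_
  linear_combination -hbalance

/-- Let `k ≥ 3` and let `G` be an `egr(n, k, g, λ)` graph with `g = 2h + 1` odd, and
let `v` be a vertex. Then the number of edges both of whose endpoints are at distance
exactly `h` from `v` equals `kλ/2`, and the number of edges with one endpoint at
distance exactly `h` and the other at distance exactly `h + 1` from `v` equals
`k((k-1)^h - λ)`. -/
theorem egr_odd_girth_edge_counts (n k g lam h : ℕ) (hk : 3 ≤ k) (hg : g = 2 * h + 1)
    {V : Type*} (G : SimpleGraph V) (hegr : G.IsEGR n k g lam) (v : V) :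
    2 * Nat.card {e : Sym2 V // e ∈ G.edgeSet ∧ ∀ x ∈ e, G.dist v x = h} = k * lam ∧
    (Nat.card {e : Sym2 V // e ∈ G.edgeSet ∧
        ∃ x y : V, e = s(x, y) ∧ G.dist v x = h ∧ G.dist v y = h + 1} : ℤ)
      = k * (((k : ℤ) - 1) ^ h - lam) := by
  obtain ⟨_, -, hdeg, hgirth, hlam⟩ := hegr
  subst hg
  have hlocfin : G.LocallyFinite := fun x => Fintype.ofFinite (G.neighborSet x)
  have hh : h ≠ 0 := by
    rintro rfl
    simpa [hgirth] using G.three_le_egirth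
  exact egr_odd_girth_edge_counts_general G
    (fun x => by rw [← hdeg x, ← Set.fintypeCard_eq_ncard, card_neighborSet_eq_degree])
    hh hgirth.ge v (hlam v)
end

section
/- Let k ≥ 3 and let G be an egr(n,k,g,λ) graph with g = 2h+1 odd. Then for every vertex v of G, the number of closed walks of length g+1 based at v that are cycles is at most k·((k−1)^{h+1} − λ); equivalently, every vertex of G is contained in at most (k choose 2)·((k−1)^h − λ/(k−1)) distinct (g+1)-cycles. -/
/-!
Cut a cycle of length `2h + 1` or `2h + 2` through `v`, rooted at `v` and oriented, after its first
`h + 2` edges. What remains is a path of length at most `h`, and two different such paths with the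
same ends would close up to a cycle shorter than the girth; so the initial trail determines the
cycle. In a `k`-regular graph at most `k (k - 1)^(h + 1)` trails of length `h + 2` start at `v`,
which bounds the rooted cycles of both lengths together. Each rooted cycle uses exactly two edges at
`v`, so the `k` edges at `v`, each on `2λ` rooted cycles of length `2h + 1`, account for `kλ` of
them; the rest is left for the cycles of length `2h + 2`.
-/

open SimpleGraph

namespace EdgeGirthRegular

open Finset

variable {V : Type*} {G : SimpleGraph V}

section Trails

variable (G) in
/-- The trails of length `m` starting at `u`, each bundled with its end vertex. -/
def trailsFrom (u : V) (m : ℕ) : Set (Σ w, G.Walk u w) :=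
  {p | p.2.IsTrail ∧ p.2.length = m}

lemma encard_trailsFrom_zero_le_one (u : V) : (trailsFrom G u 0).encard ≤ 1 := by
  refine Set.encard_le_one_iff.2 ?_
  rintro ⟨_, p⟩ ⟨_, q⟩ ⟨-, hp⟩ ⟨-, hq⟩
  cases p <;> cases q <;> simp_all

lemma encard_trailsFrom_snd_mem_le {u : V} {m N : ℕ} (s : Finset V)
    (hN : ∀ c, G.Adj u c → {p ∈ trailsFrom G c m | s(u, c) ∉ p.2.edges}.encard ≤ N) :
    {p ∈ trailsFrom G u (m + 1) | p.2.snd ∈ s}.encard ≤ (#s * N : ℕ) := by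
  let extensions (c : V) : Set (Σ w, G.Walk u w) :=
    ⋃ h : G.Adj u c, Sigma.map id (fun _ => Walk.cons h) ''
      {p ∈ trailsFrom G c m | s(u, c) ∉ p.2.edges}
  have hcover : {p ∈ trailsFrom G u (m + 1) | p.2.snd ∈ s} ⊆ ⋃ c ∈ s, extensions c := by
    rintro ⟨w, p⟩ ⟨⟨htrail, hlen⟩, hsnd⟩
    cases p with
    | nil => simp at hlen
    | @cons _ c _ h q =>
      obtain ⟨hq, hedge⟩ := Walk.isTrail_cons h q |>.1 htrail
      simp only [Walk.snd_cons] at hsnd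
      exact Set.mem_biUnion hsnd <| Set.mem_iUnion.2
        ⟨h, ⟨w, q⟩, ⟨⟨hq, Nat.succ.inj hlen⟩, hedge⟩, rfl⟩
  have hextensions : ∀ c ∈ s, (extensions c).encard ≤ N := by
    intro c _
    by_cases h : G.Adj u c
    · simpa [extensions, h] using (Set.encard_image_le _ _).trans (hN c h)
    · simp [extensions, h]
  calc _ ≤ (⋃ c ∈ s, extensions c).encard := Set.encard_le_encard hcover
    _ ≤ ∑ c ∈ s, (extensions c).encard := s.set_encard_biUnion_le extensions
    _ ≤ #s • (N : ℕ∞) := sum_le_card_nsmul _ _ _ hextensions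
    _ = (#s * N : ℕ) := by simp

lemma encard_trailsFrom_avoiding_le [G.LocallyFinite] {k : ℕ} (hdeg : ∀ w, G.degree w ≤ k)
    {a b : V} (hab : G.Adj a b) (m : ℕ) :
    {p ∈ trailsFrom G b m | s(a, b) ∉ p.2.edges}.encard ≤ ((k - 1) ^ m : ℕ) := by
  classical
  induction m generalizing a b with
  | zero =>
    rw [pow_zero, Nat.cast_one]
    exact (Set.encard_le_encard fun p hp => hp.1).trans (encard_trailsFrom_zero_le_one b)
  | succ m ih =>
    have hsub : {p ∈ trailsFrom G b (m + 1) | s(a, b) ∉ p.2.edges} ⊆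
        {p ∈ trailsFrom G b (m + 1) | p.2.snd ∈ (G.neighborFinset b).erase a} := by
      rintro ⟨w, p⟩ ⟨hp, hedge⟩
      refine ⟨hp, ?_⟩
      cases p with
      | nil => simp [trailsFrom] at hp
      | cons h q =>
        simp only [Walk.snd_cons, mem_erase, mem_neighborFinset]
        exact ⟨by rintro rfl; simp [Sym2.eq_swap] at hedge, h⟩
    have hcard : #((G.neighborFinset b).erase a) ≤ k - 1 := by
      rw [card_erase_of_mem (by simpa using hab.symm), card_neighborFinset_eq_degree]
      exact Nat.sub_le_sub_right (hdeg b) 1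
    calc _ ≤ {p ∈ trailsFrom G b (m + 1) | p.2.snd ∈ (G.neighborFinset b).erase a}.encard :=
          Set.encard_le_encard hsub
      _ ≤ (#((G.neighborFinset b).erase a) * (k - 1) ^ m : ℕ) :=
          encard_trailsFrom_snd_mem_le _ fun c hbc => ih hbc
      _ ≤ ((k - 1) ^ (m + 1) : ℕ) := by
          rw [pow_succ']
          exact_mod_cast Nat.mul_le_mul_right _ hcard

lemma encard_trailsFrom_succ_le [G.LocallyFinite] {k : ℕ} (hdeg : ∀ w, G.degree w ≤ k)
    (v : V) (m : ℕ) : (trailsFrom G v (m + 1)).encard ≤ (G.degree v * (k - 1) ^ m : ℕ) := by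
  have hsub : trailsFrom G v (m + 1) ⊆
      {p ∈ trailsFrom G v (m + 1) | p.2.snd ∈ G.neighborFinset v} := by
    intro p hp
    have hnil : ¬ p.2.Nil := by simp [← Walk.length_eq_zero_iff, hp.2]
    exact ⟨hp, by simpa using p.2.adj_snd hnil⟩
  exact (Set.encard_le_encard hsub).trans <|
    encard_trailsFrom_snd_mem_le _ fun c hvc => encard_trailsFrom_avoiding_le hdeg hvc m

end Trails

section Cycles

lemma eq_of_isPath_of_length_add_length_lt_egirth {u v : V} {p q : G.Walk u v} (hp : p.IsPath)
    (hq : q.IsPath) (h : ((p.length + q.length : ℕ) : ℕ∞) < G.egirth) : p = q := by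
  by_contra hne
  obtain ⟨w, -, -, c, hc, hlen⟩ := hp.exists_isCycle_length_le_add_of_ne hq hne
  exact ((egirth_le_length hc).trans (Nat.cast_le.2 hlen)).not_gt h

lemma append_eq_append_of_isCycle {v w w' : V} {p : G.Walk v w} {q : G.Walk w v}
    {p' : G.Walk v w'} {q' : G.Walk w' v} (hpp' : (⟨w, p⟩ : Σ x, G.Walk v x) = ⟨w', p'⟩)
    (hp : ¬ p.Nil) (hc : (p.append q).IsCycle) (hc' : (p'.append q').IsCycle)
    (hlen : ((q.length + q'.length : ℕ) : ℕ∞) < G.egirth) :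
    p.append q = p'.append q' := by
  cases hpp'
  rw [eq_of_isPath_of_length_add_length_lt_egirth (hc.isPath_of_append_right hp)
    (hc'.isPath_of_append_right hp) hlen]

lemma encard_isCycle_length_le [G.LocallyFinite] {k : ℕ} (hdeg : ∀ w, G.degree w ≤ k) {d : ℕ}
    (hgirth : ((2 * d : ℕ) : ℕ∞) < G.egirth) (v : V) (m : ℕ) :
    {p : G.Walk v v | p.IsCycle ∧ m + 1 ≤ p.length ∧ p.length ≤ m + 1 + d}.encard ≤
      (G.degree v * (k - 1) ^ m : ℕ) := by
  refine (Set.encard_le_encard_of_injOn (f := fun p => ⟨_, p.take (m + 1)⟩) ?_ ?_).trans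
    (encard_trailsFrom_succ_le hdeg v m)
  · rintro p ⟨hp, hm, -⟩
    exact ⟨Walk.isTrail_of_isSubwalk (p.isSubwalk_take _) hp.isTrail,
      by simpa [Walk.take_length] using hm⟩
  · rintro p ⟨hp, hpm, hpd⟩ q ⟨hq, -, hqd⟩ hpq
    rw [← p.append_take_drop_eq (m + 1)] at hp ⊢
    rw [← q.append_take_drop_eq (m + 1)] at hq ⊢
    refine append_eq_append_of_isCycle hpq ?_ hp hq (lt_of_le_of_lt ?_ hgirth)
    · rw [← Walk.length_eq_zero_iff, Walk.take_length]
      omega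
    · simp only [Walk.drop_length]
      exact_mod_cast (by omega : p.length - (m + 1) + (q.length - (m + 1)) ≤ 2 * d)

variable (G) in
/-- The cycles of length `l` through `v`, as closed walks based at `v`; every cycle occurs twice,
once for each orientation. -/
def rootedCycles (v : V) (l : ℕ) : Set (G.Walk v v) :=
  {p | p.IsCycle ∧ p.length = l}

lemma finite_rootedCycles [G.LocallyFinite] (v : V) (l : ℕ) : (rootedCycles G v l).Finite := by
  classical
  exact (Set.toFinite {p : G.Walk v v | p.length = l}).subset fun _ hp => hp.2

lemma ncard_rootedCycles_add_ncard_rootedCycles_le [G.LocallyFinite] {k h : ℕ}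
    (hdeg : ∀ w, G.degree w ≤ k) (hgirth : ((2 * h + 1 : ℕ) : ℕ∞) ≤ G.egirth) (v : V) :
    (rootedCycles G v (2 * h + 1)).ncard + (rootedCycles G v (2 * h + 2)).ncard ≤
      G.degree v * (k - 1) ^ (h + 1) := by
  have hdisj : Disjoint (rootedCycles G v (2 * h + 1)) (rootedCycles G v (2 * h + 2)) :=
    Set.disjoint_left.2 fun p hp hp' => by
      have := hp.2.symm.trans hp'.2
      omega
  have hsub : rootedCycles G v (2 * h + 1) ∪ rootedCycles G v (2 * h + 2) ⊆
      {p | p.IsCycle ∧ h + 1 + 1 ≤ p.length ∧ p.length ≤ h + 1 + 1 + h} := by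
    rintro p (⟨hp, hl⟩ | ⟨hp, hl⟩) <;>
    · have := hp.three_le_length
      exact ⟨hp, by omega, by omega⟩
  have hlt : ((2 * h : ℕ) : ℕ∞) < G.egirth :=
    lt_of_lt_of_le (Nat.cast_lt.2 (Nat.lt_succ_self _)) hgirth
  rw [← Set.ncard_union_eq hdisj (finite_rootedCycles v _) (finite_rootedCycles v _)]
  exact ENat.toNat_le_of_le_natCast <|
    (Set.encard_le_encard hsub).trans (encard_isCycle_length_le hdeg hlt v (h + 1))

lemma sum_card_filter_mem_edges_eq_two_mul_card [DecidableEq V] {v : V} [Fintype (G.neighborSet v)]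
    {S : Finset (G.Walk v v)} (hS : ∀ p ∈ S, p.IsCycle) :
    ∑ u ∈ G.neighborFinset v, #{p ∈ S | s(v, u) ∈ p.edges} = 2 * #S := by
  have htwo : ∀ p ∈ S, #{u ∈ G.neighborFinset v | s(v, u) ∈ p.edges} = 2 := by
    intro p hp
    rw [← (hS p hp).ncard_neighborSet_toSubgraph_eq_two p.start_mem_support,
      ← Set.ncard_coe_finset]
    congr 1
    ext u
    simpa [Walk.adj_toSubgraph_iff_mem_edges] using p.adj_of_mem_edges
  calc _ = ∑ p ∈ S, #{u ∈ G.neighborFinset v | s(v, u) ∈ p.edges} :=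
        sum_card_bipartiteAbove_eq_sum_card_bipartiteBelow _
    _ = 2 * #S := by rw [sum_congr rfl htwo, sum_const, smul_eq_mul, mul_comm]

lemma degree_mul_le_ncard_rootedCycles [G.LocallyFinite] {v : V} {l lam : ℕ}
    (hlam : ∀ u, G.Adj v u → 2 * lam ≤ {p ∈ rootedCycles G v l | s(v, u) ∈ p.edges}.ncard) :
    G.degree v * lam ≤ (rootedCycles G v l).ncard := by
  classical
  have hfin := finite_rootedCycles (G := G) v l
  have hmany : ∀ u ∈ G.neighborFinset v, 2 * lam ≤ #{p ∈ hfin.toFinset | s(v, u) ∈ p.edges} := by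
    intro u hu
    simpa [← Set.ncard_coe_finset] using hlam u (by simpa using hu)
  have hsum := card_nsmul_le_sum _ _ _ hmany
  rw [sum_card_filter_mem_edges_eq_two_mul_card fun p hp => (hfin.mem_toFinset.1 hp).1, smul_eq_mul,
    card_neighborFinset_eq_degree, ← Set.ncard_eq_toFinset_card _ hfin] at hsum
  linarith

end Cycles

end EdgeGirthRegular

open EdgeGirthRegular in
theorem egr_odd_girth_g_plus_one_cycles_general {V : Type*} {G : SimpleGraph V} [G.LocallyFinite]
    {k h lam : ℕ} (hdeg : ∀ w, G.degree w ≤ k) (hgirth : ((2 * h + 1 : ℕ) : ℕ∞) ≤ G.egirth) {v : V}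
    (hlam : ∀ u, G.Adj v u →
      2 * lam ≤ Nat.card {p : G.Walk v v // p.IsCycle ∧ p.length = 2 * h + 1 ∧ s(v, u) ∈ p.edges}) :
    (Nat.card {p : G.Walk v v // p.IsCycle ∧ p.length = 2 * h + 2} : ℤ) ≤
      G.degree v * (((k : ℤ) - 1) ^ (h + 1) - lam) := by
  have hboth := ncard_rootedCycles_add_ncard_rootedCycles_le hdeg hgirth v
  have hodd : G.degree v * lam ≤ (rootedCycles G v (2 * h + 1)).ncard :=
    degree_mul_le_ncard_rootedCycles fun u hu => by
      simp only [rootedCycles, Set.mem_ofPred_eq, and_assoc]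
      exact hlam u hu
  have heven : (rootedCycles G v (2 * h + 2)).ncard + G.degree v * lam ≤
      G.degree v * (k - 1) ^ (h + 1) := by omega
  change ((rootedCycles G v (2 * h + 2)).ncard : ℤ) ≤ _
  obtain rfl | hk := Nat.eq_zero_or_pos k
  · simpa [Nat.le_zero.1 (hdeg v)] using heven
  · zify [hk] at heven
    linarith

/-- Let `k ≥ 3` and let `G` be an `egr(n, k, g, λ)` graph with `g = 2h + 1` odd. Then
every vertex `v` of `G` is contained in at most `(k choose 2)((k-1)^h - λ/(k-1))`
distinct `(g+1)`-cycles; equivalently, the number of closed walks of length `g + 1`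
based at `v` that are cycles is at most `k((k-1)^(h+1) - λ)` (each `(g+1)`-cycle
through `v` corresponds to exactly two such closed walks). -/
theorem egr_odd_girth_g_plus_one_cycles (n k g lam h : ℕ) (hk : 3 ≤ k)
    (hg : g = 2 * h + 1) {V : Type*} (G : SimpleGraph V) (hegr : G.IsEGR n k g lam)
    (v : V) :
    (Nat.card {p : G.Walk v v // p.IsCycle ∧ p.length = g + 1} : ℤ) ≤
      k * (((k : ℤ) - 1) ^ (h + 1) - lam) := by
  classical
  obtain ⟨_, -, hreg, hgirth, hlam⟩ := hegr
  have := Fintype.ofFinite V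
  have hdeg (w : V) : G.degree w = k := by
    rw [← hreg w, ← card_neighborSet_eq_degree, Set.fintypeCard_eq_ncard]
  subst hg
  simpa only [hdeg] using egr_odd_girth_g_plus_one_cycles_general (fun w => (hdeg w).le) hgirth.ge
    fun u hvu => (hlam v u hvu).ge
end
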